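/- Let π: O(G) → O(H) be a surjective morphism of Hopf algebras over an algebraically closed field k, with O(G) cosemisimple (i.e. G linearly reductive). Assume π is left-normal or right-normal, and that the square of the antipode of O(H) leaves every simple subcoalgebra of O(H) invariant. Then O(H) is cosemisimple and π is normal (both left- and right-normal). -/

import Mathlib

/- Common infrastructure: right comodules over coalgebras, simplicity,
cosemisimplicity, subcoalgebras, adjoint coactions, normality, etc. -/

open TensorProduct

universe u

namespace QG

variable (k : Type u) [Field k]

section Coalg

variable (C : Type u) [AddCommGroup C] [Module k C] [Coalgebra k C]

/-- `ρ : V →ₗ[k] V ⊗[k] C` is a (coassociative, counital) right coaction. -/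
structure IsComod {V : Type u} [AddCommGroup V] [Module k V]
    (ρ : V →ₗ[k] V ⊗[k] C) : Prop where
  coassoc : ∀ v : V, ρ.rTensor C (ρ v) =
    (TensorProduct.assoc k V C C).symm.toLinearMap
      ((Coalgebra.comul (R := k) (A := C)).lTensor V (ρ v))
  counit : ∀ v : V, (TensorProduct.rid k V)
      ((Coalgebra.counit (R := k) (A := C)).lTensor V (ρ v)) = v

/-- A submodule `U ≤ V` is a subcomodule if the coaction restricts to it,
i.e. maps `U` into the image of `U ⊗ C` in `V ⊗ C`. -/
def IsSubcomod {V : Type u} [AddCommGroup V] [Module k V]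
    (ρ : V →ₗ[k] V ⊗[k] C) (U : Submodule k V) : Prop :=
  ∀ u ∈ U, ρ u ∈ LinearMap.range ((U.subtype).rTensor C)

/-- A simple subcomodule: a nonzero subcomodule with no nonzero proper
subcomodules below it. -/
def IsSimpleSubcomod {V : Type u} [AddCommGroup V] [Module k V]
    (ρ : V →ₗ[k] V ⊗[k] C) (U : Submodule k V) : Prop :=
  IsSubcomod k C ρ U ∧ U ≠ ⊥ ∧
    ∀ U' : Submodule k V, U' ≤ U → IsSubcomod k C ρ U' → U' = ⊥ ∨ U' = U

/-- A comodule is simple if it is simple as a subcomodule of itself. -/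
def IsSimpleComod {V : Type u} [AddCommGroup V] [Module k V]
    (ρ : V →ₗ[k] V ⊗[k] C) : Prop :=
  IsSimpleSubcomod k C ρ ⊤

/-- Morphisms of right `C`-comodules. -/
def IsComodHom {V W : Type u} [AddCommGroup V] [Module k V]
    [AddCommGroup W] [Module k W]
    (ρV : V →ₗ[k] V ⊗[k] C) (ρW : W →ₗ[k] W ⊗[k] C) (f : V →ₗ[k] W) : Prop :=
  ρW ∘ₗ f = (f.rTensor C) ∘ₗ ρV

/-- `C` is cosemisimple: every right `C`-comodule is an (internal) direct sum
of simple subcomodules. -/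
def IsCosemisimple : Prop :=
  ∀ (V : Type u) [AddCommGroup V] [Module k V]
    (ρ : V →ₗ[k] V ⊗[k] C), IsComod k C ρ →
    ∃ (ι : Type u) (U : ι → Submodule k V),
      (∀ i, IsSimpleSubcomod k C ρ (U i)) ∧
      iSupIndep U ∧ (⨆ i, U i) = ⊤

/-- Subcoalgebras of `C`, as submodules. -/
def IsSubcoalgebra (D : Submodule k C) : Prop :=
  ∀ x ∈ D, Coalgebra.comul (R := k) x ∈
    LinearMap.range (TensorProduct.map D.subtype D.subtype)

/-- Simple subcoalgebras: nonzero ones with no nonzero proper subcoalgebras. -/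
def IsSimpleSubcoalgebra (D : Submodule k C) : Prop :=
  IsSubcoalgebra k C D ∧ D ≠ ⊥ ∧
    ∀ D' : Submodule k C, D' ≤ D → IsSubcoalgebra k C D' → D' = ⊥ ∨ D' = D

/-- The coefficient space of a comodule: the smallest submodule `D ≤ C` such
that the coaction factors through `V ⊗ D`.  For a simple comodule this is its
coefficient coalgebra. -/
def coeffSpace {V : Type u} [AddCommGroup V] [Module k V]
    (ρ : V →ₗ[k] V ⊗[k] C) : Submodule k C :=
  sInf {D : Submodule k C | ∀ v : V, ρ v ∈ LinearMap.range ((D.subtype).lTensor V)}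

/-- Corestriction of a coaction along a linear map of coalgebras `π : C → D`. -/
noncomputable def cores {D : Type u} [AddCommGroup D] [Module k D]
    {V : Type u} [AddCommGroup V] [Module k V]
    (π : C →ₗ[k] D) (ρ : V →ₗ[k] V ⊗[k] C) : V →ₗ[k] V ⊗[k] D :=
  (π.lTensor V) ∘ₗ ρ

end Coalg

section Bialg

variable (H : Type u) [Ring H] [Bialgebra k H]

/-- An invariant vector for a coaction of a bialgebra. -/
def IsInvariant {V : Type u} [AddCommGroup V] [Module k V]
    (ρ : V →ₗ[k] V ⊗[k] H) (v : V) : Prop :=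
  ρ v = v ⊗ₜ[k] (1 : H)

/-- The tensor product coaction on `V ⊗ W` for a bialgebra `H`:
`v ⊗ w ↦ (v₀ ⊗ w₀) ⊗ v₁w₁`. -/
noncomputable def tensorCoact {V W : Type u}
    [AddCommGroup V] [Module k V] [AddCommGroup W] [Module k W]
    (ρV : V →ₗ[k] V ⊗[k] H) (ρW : W →ₗ[k] W ⊗[k] H) :
    (V ⊗[k] W) →ₗ[k] (V ⊗[k] W) ⊗[k] H :=
  ((LinearMap.mul' k H).lTensor (V ⊗[k] W)) ∘ₗ
    (TensorProduct.tensorTensorTensorComm k V H W H).toLinearMap ∘ₗ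
    (TensorProduct.map ρV ρW)

/-- `O(G/H)`: the right coinvariants `{x | (id ⊗ π)Δ(x) = x ⊗ 1}` of a
quotient map `π`. -/
noncomputable def quotientSpaceLeft {B : Type u} [AddCommGroup B] [Module k B] [One B]
    (π : H →ₗ[k] B) : Submodule k H :=
  LinearMap.ker ((π.lTensor H) ∘ₗ (Coalgebra.comul (R := k) (A := H)) -
    (TensorProduct.mk k H B).flip 1)

/-- `O(H\G)`: the left coinvariants `{x | (π ⊗ id)Δ(x) = 1 ⊗ x}`. -/
noncomputable def quotientSpaceRight {B : Type u} [AddCommGroup B] [Module k B] [One B]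
    (π : H →ₗ[k] B) : Submodule k H :=
  LinearMap.ker ((π.rTensor H) ∘ₗ (Coalgebra.comul (R := k) (A := H)) -
    (TensorProduct.mk k B H) 1)

end Bialg

section Hopf

variable (H : Type u) [Ring H] [HopfAlgebra k H]

/-- Iterated comultiplication `x ↦ x₁ ⊗ (x₂ ⊗ x₃)`. -/
noncomputable def comul2 : H →ₗ[k] H ⊗[k] (H ⊗[k] H) :=
  ((Coalgebra.comul (R := k) (A := H)).lTensor H) ∘ₗ (Coalgebra.comul (R := k) (A := H))

/-- The right adjoint coaction `x ↦ x₂ ⊗ S(x₁)x₃`. -/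
noncomputable def adR : H →ₗ[k] H ⊗[k] H :=
  ((LinearMap.mul' k H).lTensor H) ∘ₗ
    (TensorProduct.assoc k H H H).toLinearMap ∘ₗ
    (((TensorProduct.comm k H H).toLinearMap).rTensor H) ∘ₗ
    (TensorProduct.assoc k H H H).symm.toLinearMap ∘ₗ
    ((HopfAlgebra.antipode (R := k) (A := H)).rTensor (H ⊗[k] H)) ∘ₗ
    comul2 k H

/-- The left adjoint coaction `x ↦ x₁S(x₃) ⊗ x₂` (a left coaction, with the
coacting tensorand on the left). -/
noncomputable def adL : H →ₗ[k] H ⊗[k] H :=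
  ((LinearMap.mul' k H).rTensor H) ∘ₗ
    (TensorProduct.assoc k H H H).symm.toLinearMap ∘ₗ
    (((TensorProduct.comm k H H).toLinearMap).lTensor H) ∘ₗ
    (((HopfAlgebra.antipode (R := k) (A := H)).lTensor H).lTensor H) ∘ₗ
    comul2 k H

variable {B : Type u} [AddCommGroup B] [Module k B]

/-- `π : O(G) → O(H)` is right-normal: it is a morphism of right
`O(G)`-comodules for the right adjoint coaction, i.e. the right adjoint
coaction descends along `π`. -/
def IsRightNormal (π : H →ₗ[k] B) : Prop :=
  ∃ ρ : B →ₗ[k] B ⊗[k] H, ρ ∘ₗ π = (π.rTensor H) ∘ₗ adR k H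

/-- `π : O(G) → O(H)` is left-normal: the left adjoint coaction descends
along `π`. -/
def IsLeftNormal (π : H →ₗ[k] B) : Prop :=
  ∃ lam : B →ₗ[k] H ⊗[k] B, lam ∘ₗ π = (π.lTensor H) ∘ₗ adL k H

end Hopf

end QG

namespace QG

variable (k : Type u) [Field k]

section Coalg2

variable (C : Type u) [AddCommGroup C] [Module k C] [Coalgebra k C]

/-- A bundled simple right `C`-comodule. -/
structure SimpleComodule where
  V : Type u
  [addCommGroup : AddCommGroup V]
  [module : Module k V]
  ρ : V →ₗ[k] V ⊗[k] C
  isComod : IsComod k C ρ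
  isSimple : IsSimpleComod k C ρ

attribute [instance] SimpleComodule.addCommGroup SimpleComodule.module

/-- A simple comodule `(T, ρT)` is a constituent of a comodule `(V, ρV)`
(over a cosemisimple coalgebra) iff there is a nonzero comodule map `T → V`. -/
def IsConstituent {T V : Type u} [AddCommGroup T] [Module k T]
    [AddCommGroup V] [Module k V]
    (ρT : T →ₗ[k] T ⊗[k] C) (ρV : V →ₗ[k] V ⊗[k] C) : Prop :=
  ∃ f : T →ₗ[k] V, f ≠ 0 ∧ IsComodHom k C ρT ρV f

/-- Isomorphism of (simple) comodules. -/
def comodIsoRel (X Y : SimpleComodule k C) : Prop :=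
  ∃ e : X.V ≃ₗ[k] Y.V, IsComodHom k C X.ρ Y.ρ e.toLinearMap

/-- The set `Ĉ` of isomorphism classes of simple right `C`-comodules. -/
def SimpleComodQuot := Quot (comodIsoRel k C)

/-- The isomorphism class of a simple comodule. -/
def SimpleComodule.cls (X : SimpleComodule k C) : SimpleComodQuot k C :=
  Quot.mk _ X

/-- Group-like elements of a coalgebra; these correspond to the
one-dimensional comodules, i.e. to characters. -/
def IsGroupLike (a : C) : Prop :=
  Coalgebra.counit (R := k) (A := C) a = (1 : k) ∧
    Coalgebra.comul (R := k) (A := C) a = a ⊗ₜ[k] a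

/-- A linear map `φ : C → Z` out of a coalgebra is central if
`φ(x₁) ⊗ x₂ = φ(x₂) ⊗ x₁`. -/
def IsCentralMap {Z : Type u} [AddCommGroup Z] [Module k Z] (φ : C →ₗ[k] Z) : Prop :=
  (φ.rTensor C) ∘ₗ (Coalgebra.comul (R := k) (A := C)) =
    (φ.rTensor C) ∘ₗ (TensorProduct.comm k C C).toLinearMap ∘ₗ
      (Coalgebra.comul (R := k) (A := C))

/-- The simple comodule `X` has "central character" `g` with respect to the
quotient map `γ : C → Z`: corestricted along `γ`, the coaction on `X` is a sum
of copies of the character `g`. -/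
def HasCentralChar {Z : Type u} [AddCommGroup Z] [Module k Z]
    (γ : C →ₗ[k] Z) (X : SimpleComodule k C) (g : Z) : Prop :=
  ∀ v : X.V, cores k C γ X.ρ v = v ⊗ₜ[k] g

end Coalg2

/-- The k-span of the set of products `g * a`, `a ∈ Am`; for `Am` a submodule
this is the left ideal generated by `Am`. -/
def leftIdealGen {G : Type u} [Ring G] [Module k G] (Am : Submodule k G) :
    Submodule k G :=
  Submodule.span k {x : G | ∃ g : G, ∃ a ∈ Am, x = g * a}

end QG

/-!
A Hopf algebra is cosemisimple exactly when it carries a Haar functional, a two-sided integral `h`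
with `h(1) = 1`, so the task is to produce one on `O(H)`. Right-normality lets the adjoint coaction
of `O(G)` descend to `O(H)`, and averaging over `G` gives a projection `p` of `O(H)` onto the
invariants of its adjoint coaction that commutes with this coaction. Composing with `p` a functional
that is `1` at `1` and vanishes on all simple subcoalgebras other than `k1` gives a class function
`f`. By Schur's lemma `f` acts on a simple `O(H)`-comodule `W` by a scalar. Since the square of the
antipode preserves the coefficient coalgebra of `W`, it acts on `End W` by conjugation with some `u`
(Skolem-Noether), and the twisted trace `tr(u ·)` is a nonzero adjoint-invariant coefficient of `W`;
evaluating `f` on it shows that the scalar is `0` unless `W` is trivial.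

Right-normality also makes the `H`-invariants of a `G`-comodule a `G`-subcomodule, so a simple
`G`-comodule restricts to `H` either trivially or without invariants, and in the second case `f`
acts on it nilpotently. Hence `O(H)` is the sum of its invariants `k1` and the generalised
`0`-eigenspace of `f`, and a functional that is `1` at `1` and kills that eigenspace is a Haar
functional.

The left-normal case follows by passing to `A^{op,cop}`. A Haar functional makes the antipode
injective, and the antipode, as a bialgebra map from `A` to `A^{op,cop}`, exchanges the left and
right adjoint coactions; hence the two kinds of normality agree.
-/

namespace QG

open TensorProduct Coalgebra HopfAlgebra WithConv
open scoped RingTheory.LinearMap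

local notation:70 α:70 "⋆" β:71 => ofConv (toConv α * toConv β)

section Slice

variable {k V V' C C' : Type*} [Field k] [AddCommGroup V] [Module k V] [AddCommGroup V']
  [Module k V'] [AddCommGroup C] [Module k C] [AddCommGroup C'] [Module k C']

/-- The right slice map `v ⊗ c ↦ ψ(c) v`, linear in the functional `ψ`. -/
noncomputable def sliceRight : (C →ₗ[k] k) →ₗ[k] V ⊗[k] C →ₗ[k] V :=
  LinearMap.compRight k (TensorProduct.rid k V).toLinearMap ∘ₗ LinearMap.lTensorHom V

/-- The left slice map `v ⊗ c ↦ φ(v) c`, linear in the functional `φ`. -/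
noncomputable def sliceLeft : (V →ₗ[k] k) →ₗ[k] V ⊗[k] C →ₗ[k] C :=
  LinearMap.compRight k (TensorProduct.lid k C).toLinearMap ∘ₗ LinearMap.rTensorHom C

@[simp]
theorem sliceRight_tmul (ψ : C →ₗ[k] k) (v : V) (c : C) :
    sliceRight ψ (v ⊗ₜ[k] c) = ψ c • v := by
  simp [sliceRight]

@[simp]
theorem sliceLeft_tmul (φ : V →ₗ[k] k) (v : V) (c : C) :
    sliceLeft φ (v ⊗ₜ[k] c) = φ v • c := by
  simp [sliceLeft]

theorem eq_of_forall_dual {x y : V} (h : ∀ φ : V →ₗ[k] k, φ x = φ y) : x = y :=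
  Module.eval_apply_injective k (LinearMap.ext h)

theorem eq_of_forall_sliceRight {z z' : V ⊗[k] C}
    (h : ∀ ψ : C →ₗ[k] k, sliceRight ψ z = sliceRight ψ z') : z = z' := by
  classical
  let b := Module.Basis.ofVectorSpace k C
  apply (TensorProduct.equivFinsuppOfBasisRight (M := V) b).injective
  ext i
  rw [TensorProduct.equivFinsuppOfBasisRight_apply, TensorProduct.equivFinsuppOfBasisRight_apply]
  exact h (b.coord i)

theorem apply_sliceRight (φ : V →ₗ[k] k) (ψ : C →ₗ[k] k) (z : V ⊗[k] C) :
    φ (sliceRight ψ z) = LinearMap.mul' k k (TensorProduct.map φ ψ z) :=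
  LinearMap.congr_fun (f := φ ∘ₗ sliceRight ψ) (g := LinearMap.mul' k k ∘ₗ TensorProduct.map φ ψ)
    (by ext; simp [mul_comm]) z

theorem apply_sliceLeft (φ : V →ₗ[k] k) (ψ : C →ₗ[k] k) (z : V ⊗[k] C) :
    ψ (sliceLeft φ z) = LinearMap.mul' k k (TensorProduct.map φ ψ z) :=
  LinearMap.congr_fun (f := ψ ∘ₗ sliceLeft φ) (g := LinearMap.mul' k k ∘ₗ TensorProduct.map φ ψ)
    (by ext; simp) z

theorem sliceRight_rTensor (f : V →ₗ[k] V') (ψ : C →ₗ[k] k) (z : V ⊗[k] C) :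
    sliceRight ψ (f.rTensor C z) = f (sliceRight ψ z) :=
  LinearMap.congr_fun (f := sliceRight ψ ∘ₗ f.rTensor C) (g := f ∘ₗ sliceRight ψ)
    (by ext; simp) z

theorem sliceRight_lTensor (g : C →ₗ[k] C') (ψ : C' →ₗ[k] k) (z : V ⊗[k] C) :
    sliceRight ψ (g.lTensor V z) = sliceRight (ψ ∘ₗ g) z :=
  LinearMap.congr_fun (f := sliceRight ψ ∘ₗ g.lTensor V) (g := sliceRight (ψ ∘ₗ g))
    (by ext; simp) z

theorem sliceLeft_rTensor (f : V →ₗ[k] V') (φ : V' →ₗ[k] k) (z : V ⊗[k] C) :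
    sliceLeft φ (f.rTensor C z) = sliceLeft (φ ∘ₗ f) z :=
  LinearMap.congr_fun (f := sliceLeft φ ∘ₗ f.rTensor C) (g := sliceLeft (φ ∘ₗ f))
    (by ext; simp) z

theorem sliceLeft_lTensor (g : C →ₗ[k] C') (φ : V →ₗ[k] k) (z : V ⊗[k] C) :
    sliceLeft φ (g.lTensor V z) = g (sliceLeft φ z) :=
  LinearMap.congr_fun (f := sliceLeft φ ∘ₗ g.lTensor V) (g := g ∘ₗ sliceLeft φ)
    (by ext; simp) z

theorem sliceRight_assoc (φ : C →ₗ[k] k) (ψ : C' →ₗ[k] k) (z : (V ⊗[k] C) ⊗[k] C') :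
    sliceRight (LinearMap.mul' k k ∘ₗ TensorProduct.map φ ψ) (TensorProduct.assoc k V C C' z) =
      sliceRight φ (sliceRight ψ z) :=
  LinearMap.congr_fun
    (f := sliceRight (LinearMap.mul' k k ∘ₗ TensorProduct.map φ ψ) ∘ₗ
      (TensorProduct.assoc k V C C').toLinearMap)
    (g := sliceRight φ ∘ₗ sliceRight ψ) (by ext; simp [mul_smul, smul_comm (φ _)]) z

theorem mem_range_rTensor_subtype_iff {U : Submodule k V} {z : V ⊗[k] C} :
    z ∈ LinearMap.range (U.subtype.rTensor C) ↔ ∀ ψ : C →ₗ[k] k, sliceRight ψ z ∈ U := by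
  constructor
  · rintro ⟨t, rfl⟩ ψ
    rw [sliceRight_rTensor]
    exact Subtype.prop _
  · intro h
    obtain ⟨q, hq⟩ := U.subtype.exists_leftInverse_of_injective (Submodule.ker_subtype U)
    refine ⟨q.rTensor C z, eq_of_forall_sliceRight fun ψ => ?_⟩
    rw [sliceRight_rTensor, sliceRight_rTensor]
    exact congrArg Subtype.val (LinearMap.congr_fun hq ⟨sliceRight ψ z, h ψ⟩)

theorem mem_range_lTensor_subtype_iff {D : Submodule k C} {z : V ⊗[k] C} :
    z ∈ LinearMap.range (D.subtype.lTensor V) ↔ ∀ φ : V →ₗ[k] k, sliceLeft φ z ∈ D := by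
  constructor
  · rintro ⟨t, rfl⟩ φ
    rw [sliceLeft_lTensor]
    exact Subtype.prop _
  · intro h
    obtain ⟨q, hq⟩ := D.subtype.exists_leftInverse_of_injective (Submodule.ker_subtype D)
    refine ⟨q.lTensor V z, eq_of_forall_sliceRight fun ψ => eq_of_forall_dual (k := k) fun φ => ?_⟩
    rw [apply_sliceRight, apply_sliceRight, ← apply_sliceLeft, ← apply_sliceLeft,
      sliceLeft_lTensor, sliceLeft_lTensor]
    exact congrArg (fun d : D => ψ d) (LinearMap.congr_fun hq ⟨sliceLeft φ z, h φ⟩)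

theorem exists_finite_forall_sliceRight_mem (z : V ⊗[k] C) :
    ∃ F : Submodule k V, Module.Finite k F ∧ ∀ ψ : C →ₗ[k] k, sliceRight ψ z ∈ F := by
  obtain ⟨F, hF, hz⟩ :=
    TensorProduct.exists_finite_submodule_left_of_setFinite {z} (Set.finite_singleton z)
  exact ⟨F, hF, mem_range_rTensor_subtype_iff.1 (hz rfl)⟩

end Slice

section Action

variable {k C V W : Type u} [Field k] [AddCommGroup C] [Module k C] [AddCommGroup V] [Module k V]
  [AddCommGroup W] [Module k W]

/-- The action `v ↦ ψ(v₁) v₀` of the functional `ψ` on a comodule `V`, linear in `ψ`. -/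
noncomputable def act (ρ : V →ₗ[k] V ⊗[k] C) : (C →ₗ[k] k) →ₗ[k] Module.End k V :=
  LinearMap.lcomp k V ρ ∘ₗ sliceRight

theorem act_apply (ρ : V →ₗ[k] V ⊗[k] C) (ψ : C →ₗ[k] k) (v : V) :
    act ρ ψ v = sliceRight ψ (ρ v) :=
  rfl

theorem isSubcomod_iff_act {ρ : V →ₗ[k] V ⊗[k] C} {U : Submodule k V} :
    IsSubcomod k C ρ U ↔ ∀ ψ : C →ₗ[k] k, ∀ u ∈ U, act ρ ψ u ∈ U :=
  (forall₂_congr fun _ _ => mem_range_rTensor_subtype_iff).trans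
    ⟨fun h ψ u hu => h u hu ψ, fun h u hu ψ => h ψ u hu⟩

theorem IsSubcomod.act_mem {ρ : V →ₗ[k] V ⊗[k] C} {U : Submodule k V} (hU : IsSubcomod k C ρ U)
    (ψ : C →ₗ[k] k) {u : V} (hu : u ∈ U) : act ρ ψ u ∈ U :=
  isSubcomod_iff_act.1 hU ψ u hu

/-- The subspace of all `act ρ ψ v`, that is, the subcomodule generated by `v`. -/
noncomputable def orbit (ρ : V →ₗ[k] V ⊗[k] C) (v : V) : Submodule k V :=
  LinearMap.range ((act ρ).flip v)

theorem finite_orbit (ρ : V →ₗ[k] V ⊗[k] C) (v : V) : Module.Finite k (orbit ρ v) := by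
  obtain ⟨F, hF, h⟩ := exists_finite_forall_sliceRight_mem (ρ v)
  refine Submodule.finiteDimensional_of_le (S₂ := F) ?_
  rintro _ ⟨ψ, rfl⟩
  exact h ψ

theorem IsComodHom.map_act {ρ : V →ₗ[k] V ⊗[k] C} {σ : W →ₗ[k] W ⊗[k] C} {f : V →ₗ[k] W}
    (hf : IsComodHom k C ρ σ f) (ψ : C →ₗ[k] k) (v : V) : act σ ψ (f v) = f (act ρ ψ v) := by
  rw [act_apply, act_apply, ← sliceRight_rTensor]
  exact congrArg (sliceRight ψ) (LinearMap.congr_fun hf v)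

end Action

section Comodule

variable {k C V : Type u} [Field k] [AddCommGroup C] [Module k C] [Coalgebra k C]
  [AddCommGroup V] [Module k V]

theorem IsComod.assoc_rTensor {ρ : V →ₗ[k] V ⊗[k] C} (hρ : IsComod k C ρ) (v : V) :
    TensorProduct.assoc k V C C (ρ.rTensor C (ρ v)) = comul.lTensor V (ρ v) := by
  rw [hρ.coassoc, LinearEquiv.coe_coe, LinearEquiv.apply_symm_apply]

theorem IsComod.act_conv {ρ : V →ₗ[k] V ⊗[k] C} (hρ : IsComod k C ρ) (φ ψ : C →ₗ[k] k) :
    act ρ (φ ⋆ ψ) = act ρ φ * act ρ ψ := by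
  ext v
  calc act ρ (φ ⋆ ψ) v
      = sliceRight (LinearMap.mul' k k ∘ₗ TensorProduct.map φ ψ) (comul.lTensor V (ρ v)) := by
        rw [sliceRight_lTensor]; rfl
    _ = act ρ φ (act ρ ψ v) := by
        rw [← hρ.assoc_rTensor, sliceRight_assoc, sliceRight_rTensor]; rfl

theorem IsComod.act_counit {ρ : V →ₗ[k] V ⊗[k] C} (hρ : IsComod k C ρ) :
    act ρ Coalgebra.counit = 1 :=
  LinearMap.ext hρ.counit

theorem isComod_of_act {ρ : V →ₗ[k] V ⊗[k] C}
    (hconv : ∀ φ ψ : C →ₗ[k] k, act ρ (φ ⋆ ψ) = act ρ φ * act ρ ψ)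
    (hcounit : act ρ Coalgebra.counit = 1) : IsComod k C ρ where
  coassoc v := by
    refine eq_of_forall_sliceRight fun ψ => eq_of_forall_sliceRight fun φ => ?_
    calc sliceRight φ (sliceRight ψ (ρ.rTensor C (ρ v)))
        = act ρ (φ ⋆ ψ) v := by rw [sliceRight_rTensor, hconv]; rfl
      _ = sliceRight (LinearMap.mul' k k ∘ₗ TensorProduct.map φ ψ) (comul.lTensor V (ρ v)) := by
        rw [sliceRight_lTensor]; rfl
      _ = _ := by
        rw [← sliceRight_assoc, LinearEquiv.coe_coe, LinearEquiv.apply_symm_apply]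
  counit v := LinearMap.congr_fun hcounit v

/-- The action of the dual algebra of `C` on a right `C`-comodule. -/
noncomputable def IsComod.actAlgHom {ρ : V →ₗ[k] V ⊗[k] C} (hρ : IsComod k C ρ) :
    WithConv (C →ₗ[k] k) →ₐ[k] Module.End k V :=
  AlgHom.ofLinearMap (act ρ ∘ₗ (WithConv.linearEquiv k _).toLinearMap) hρ.act_counit
    fun φ ψ => hρ.act_conv φ.ofConv ψ.ofConv

theorem IsComod.mem_orbit {ρ : V →ₗ[k] V ⊗[k] C} (hρ : IsComod k C ρ) (v : V) : v ∈ orbit ρ v :=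
  ⟨Coalgebra.counit, LinearMap.congr_fun hρ.act_counit v⟩

theorem IsComod.isSubcomod_orbit {ρ : V →ₗ[k] V ⊗[k] C} (hρ : IsComod k C ρ) (v : V) :
    IsSubcomod k C ρ (orbit ρ v) := by
  refine isSubcomod_iff_act.2 ?_
  rintro ψ _ ⟨φ, rfl⟩
  exact ⟨ψ ⋆ φ, LinearMap.congr_fun (hρ.act_conv ψ φ) v⟩

variable (k C) in
theorem isComod_comul : IsComod k C (comul (R := k) (A := C)) where
  coassoc v := by
    rw [LinearEquiv.coe_coe, LinearEquiv.eq_symm_apply]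
    exact coassoc_apply v
  counit v := by simp

/-- The left translation `c ↦ ψ(c₁) c₂`; the right translation `c ↦ ψ(c₂) c₁` is
`act comul ψ`. -/
noncomputable def leftTranslate (ψ : C →ₗ[k] k) : C →ₗ[k] C :=
  sliceLeft ψ ∘ₗ comul

theorem apply_act_comul (φ ψ : C →ₗ[k] k) (c : C) : φ (act comul ψ c) = (φ ⋆ ψ) c :=
  apply_sliceRight φ ψ (comul c)

theorem apply_leftTranslate (φ ψ : C →ₗ[k] k) (c : C) : φ (leftTranslate ψ c) = (ψ ⋆ φ) c :=
  apply_sliceLeft ψ φ (comul c)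

theorem IsSubcomod.eq_bot_of_counit_eq_zero {D : Submodule k C}
    (hD : IsSubcomod k C comul D) (h : ∀ d ∈ D, Coalgebra.counit (R := k) d = 0) : D = ⊥ := by
  refine (Submodule.eq_bot_iff D).2 fun d hd => eq_of_forall_dual (k := k) fun ψ => ?_
  have hcounit := h _ (hD.act_mem ψ hd)
  rw [apply_act_comul] at hcounit
  rw [map_zero, ← hcounit]
  exact (LinearMap.congr_fun (congrArg ofConv (one_mul (toConv ψ))) d).symm

theorem IsComod.coact_act {ρ : V →ₗ[k] V ⊗[k] C} (hρ : IsComod k C ρ) (ψ : C →ₗ[k] k) (v : V) :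
    ρ (act ρ ψ v) = (act comul ψ).lTensor V (ρ v) := by
  refine eq_of_forall_sliceRight fun φ => ?_
  have : φ ∘ₗ act comul ψ = φ ⋆ ψ := LinearMap.ext (apply_act_comul φ ψ)
  rw [sliceRight_lTensor, this, ← act_apply, ← act_apply, hρ.act_conv]
  rfl

end Comodule

section Semisimple

variable {k C V : Type u} [Field k] [AddCommGroup C] [Module k C] [Coalgebra k C]
  [AddCommGroup V] [Module k V] {ρ : V →ₗ[k] V ⊗[k] C}

/-- A subcomodule, viewed as a submodule over the image of the dual algebra in `End V`. -/
noncomputable def IsSubcomod.toSubmodule {U : Submodule k V} (hU : IsSubcomod k C ρ U)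
    (hρ : IsComod k C ρ) : Submodule hρ.actAlgHom.range V where
  __ := U
  smul_mem' := by
    rintro ⟨_, ψ, rfl⟩ x hx
    exact hU.act_mem ψ.ofConv hx

theorem IsComod.isSubcomod_restrictScalars (hρ : IsComod k C ρ)
    (N : Submodule hρ.actAlgHom.range V) : IsSubcomod k C ρ (N.restrictScalars k) :=
  isSubcomod_iff_act.2 fun ψ _ hu => N.smul_mem ⟨act ρ ψ, toConv ψ, rfl⟩ hu

theorem IsComod.isSimpleSubcomod_restrictScalars_iff (hρ : IsComod k C ρ)
    {N : Submodule hρ.actAlgHom.range V} :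
    IsSimpleSubcomod k C ρ (N.restrictScalars k) ↔ IsSimpleModule hρ.actAlgHom.range N := by
  rw [isSimpleModule_iff_isAtom]
  constructor
  · rintro ⟨-, hbot, hmin⟩
    refine ⟨fun h => hbot (by rw [h]; rfl), fun M hM => ?_⟩
    rcases hmin (M.restrictScalars k) hM.le (hρ.isSubcomod_restrictScalars M) with h | h
    · exact Submodule.restrictScalars_injective k _ _ h
    · exact absurd (Submodule.restrictScalars_injective k _ _ h) hM.ne
  · intro hN
    refine ⟨hρ.isSubcomod_restrictScalars N,
      fun h => hN.1 (Submodule.restrictScalars_injective k _ V h), fun M hM hM' => ?_⟩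
    rcases hN.le_iff.1 (show hM'.toSubmodule hρ ≤ N from hM) with h | h
    · exact .inl (congrArg (Submodule.restrictScalars k) h)
    · exact .inr (congrArg (Submodule.restrictScalars k) h)

theorem IsComod.isSemisimpleModule_of_iSup_eq_top (hρ : IsComod k C ρ) {ι : Type*}
    {W : ι → Submodule k V} (hW : ∀ i, IsSimpleSubcomod k C ρ (W i)) (htop : ⨆ i, W i = ⊤) :
    IsSemisimpleModule hρ.actAlgHom.range V := by
  rw [← sSup_simples_eq_top_iff_isSemisimpleModule, eq_top_iff]
  set T := sSup {m : Submodule hρ.actAlgHom.range V | IsSimpleModule hρ.actAlgHom.range m}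
  have hle : ⨆ i, W i ≤ T.restrictScalars k := by
    refine iSup_le fun i => ?_
    have hi : (hW i).1.toSubmodule hρ ≤ T :=
      le_sSup (hρ.isSimpleSubcomod_restrictScalars_iff.1 (hW i))
    exact hi
  exact fun x _ => hle (htop ▸ Submodule.mem_top)

theorem IsCosemisimple.exists_isCompl (hC : IsCosemisimple k C) (hρ : IsComod k C ρ)
    {U : Submodule k V} (hU : IsSubcomod k C ρ U) : ∃ P, IsSubcomod k C ρ P ∧ IsCompl U P := by
  obtain ⟨ι, W, hW, -, htop⟩ := hC V ρ hρ
  have := hρ.isSemisimpleModule_of_iSup_eq_top hW htop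
  obtain ⟨P, hP⟩ := ComplementedLattice.exists_isCompl (hU.toSubmodule hρ)
  exact ⟨P.restrictScalars k, hρ.isSubcomod_restrictScalars P,
    (Submodule.isCompl_restrictScalars_iff k).2 hP⟩

theorem IsComod.exists_iSupIndep_isSimpleSubcomod (hρ : IsComod k C ρ)
    (h : ∀ U, IsSubcomod k C ρ U → ∃ P, IsSubcomod k C ρ P ∧ IsCompl U P) :
    ∃ (ι : Type u) (U : ι → Submodule k V),
      (∀ i, IsSimpleSubcomod k C ρ (U i)) ∧ iSupIndep U ∧ ⨆ i, U i = ⊤ := by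
  have : IsSemisimpleModule hρ.actAlgHom.range V := by
    rw [isSemisimpleModule_iff]
    refine ⟨fun N => ?_⟩
    obtain ⟨P, hP, hNP⟩ := h _ (hρ.isSubcomod_restrictScalars N)
    exact ⟨hP.toSubmodule hρ, (Submodule.isCompl_restrictScalars_iff k).1 hNP⟩
  obtain ⟨s, hindep, htop, hs⟩ :=
    IsSemisimpleModule.exists_sSupIndep_sSup_simples_eq_top hρ.actAlgHom.range V
  refine ⟨s, fun N => N.1.restrictScalars k,
    fun N => hρ.isSimpleSubcomod_restrictScalars_iff.2 (hs N N.2), fun N => ?_, ?_⟩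
  · have := (Submodule.disjoint_restrictScalars_iff k).2 ((sSupIndep_iff _).1 hindep N)
    simpa only [Submodule.restrictScalars_iSup] using this
  · rw [← Submodule.restrictScalars_iSup, ← sSup_eq_iSup', htop, Submodule.restrictScalars_top]

end Semisimple

section HaarFunctional

variable {k C : Type u} [Field k] [Ring C] [Bialgebra k C]

/-- A Haar functional on a bialgebra: an integral `h`, i.e. `h(c₁) c₂ = h(c) 1`, normalised by
`h(1) = 1`. -/
structure IsHaarFunctional (h : C →ₗ[k] k) : Prop where
  map_one : h 1 = 1
  conv : ∀ ψ : C →ₗ[k] k, h ⋆ ψ = ψ 1 • h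

theorem exists_dual_eq_one {V : Type*} [AddCommGroup V] [Module k V] {U : Submodule k V} {v : V}
    (hv : v ∉ U) : ∃ f : V →ₗ[k] k, f v = 1 ∧ ∀ u ∈ U, f u = 0 := by
  obtain ⟨f, hfv, hf⟩ := Submodule.exists_le_ker_of_notMem hv
  refine ⟨(f v)⁻¹ • f, inv_mul_cancel₀ hfv, fun u hu => ?_⟩
  rw [LinearMap.smul_apply, LinearMap.mem_ker.1 (hf hu), smul_zero]

theorem nontrivial_of_bialgebra (k C : Type*) [Field k] [Ring C] [Bialgebra k C] : Nontrivial C :=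
  (Bialgebra.counitAlgHom k C).toRingHom.domain_nontrivial

theorem act_comul_one (ψ : C →ₗ[k] k) : act comul ψ (1 : C) = ψ 1 • 1 := by
  rw [act_apply, Bialgebra.comul_one, Algebra.TensorProduct.one_def, sliceRight_tmul]

theorem IsHaarFunctional.leftTranslate_apply {h : C →ₗ[k] k} (hh : IsHaarFunctional h) (c : C) :
    leftTranslate h c = h c • 1 :=
  eq_of_forall_dual fun ψ => by
    rw [apply_leftTranslate, hh.conv, map_smul, LinearMap.smul_apply, smul_eq_mul, smul_eq_mul,
      mul_comm]

theorem IsCosemisimple.exists_isHaarFunctional (hC : IsCosemisimple k C) :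
    ∃ h : C →ₗ[k] k, IsHaarFunctional h := by
  have hone : IsSubcomod k C comul (k ∙ (1 : C)) := by
    refine isSubcomod_iff_act.2 fun ψ u hu => ?_
    obtain ⟨a, rfl⟩ := Submodule.mem_span_singleton.1 hu
    rw [map_smul, act_comul_one]
    exact Submodule.smul_mem _ _ (Submodule.smul_mem _ _ (Submodule.mem_span_singleton_self _))
  obtain ⟨P, hP, hcompl⟩ := hC.exists_isCompl (isComod_comul k C) hone
  have : Nontrivial C := nontrivial_of_bialgebra k C
  have h1P : (1 : C) ∉ P := fun h => one_ne_zero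
    (Submodule.disjoint_def.1 hcompl.disjoint 1 (Submodule.mem_span_singleton_self _) h)
  obtain ⟨h, h1, hPz⟩ := exists_dual_eq_one (k := k) h1P
  refine ⟨h, h1, fun ψ => LinearMap.ext fun a => ?_⟩
  obtain ⟨x, hx, p, hp, rfl⟩ := Submodule.mem_sup.1 (hcompl.sup_eq_top ▸ Submodule.mem_top (x := a))
  obtain ⟨c, rfl⟩ := Submodule.mem_span_singleton.1 hx
  rw [← apply_act_comul, map_add, map_add, hPz _ (hP.act_mem ψ hp), map_smul, act_comul_one]
  simp [h1, hPz p hp, mul_comm]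

end HaarFunctional

section Antipode

variable {k C : Type u} [Field k] [Ring C] [HopfAlgebra k C]

/-- Composition with an algebra map, as a homomorphism of convolution monoids. -/
noncomputable def postcomp {C R R' : Type*} [AddCommGroup C] [Module k C] [Coalgebra k C] [Ring R]
    [Algebra k R] [Ring R'] [Algebra k R'] (F : R →ₐ[k] R') :
    WithConv (C →ₗ[k] R) →* WithConv (C →ₗ[k] R') where
  toFun f := toConv (F.toLinearMap ∘ₗ f.ofConv)
  map_one' := WithConv.ext (LinearMap.ext fun _ => by simp)
  map_mul' f g := congrArg toConv (LinearMap.algHom_comp_convMul_distrib F f g)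

theorem postcomp_toConv {C R R' : Type*} [AddCommGroup C] [Module k C] [Coalgebra k C] [Ring R]
    [Algebra k R] [Ring R'] [Algebra k R'] (F : R →ₐ[k] R') (f : C →ₗ[k] R) :
    postcomp F (toConv f) = toConv (F.toLinearMap ∘ₗ f) :=
  rfl

theorem toConv_comp_antipode_mul {R : Type*} [Ring R] [Algebra k R] (F : C →ₐ[k] R) :
    toConv (F.toLinearMap ∘ₗ antipode k) * toConv F.toLinearMap = 1 := by
  have := map_mul (postcomp F) (toConv (antipode k (A := C))) (toConv .id)
  rw [LinearMap.antipode_mul_id, map_one] at this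
  exact this.symm

theorem toConv_mul_comp_antipode {R : Type*} [Ring R] [Algebra k R] (F : C →ₐ[k] R) :
    toConv F.toLinearMap * toConv (F.toLinearMap ∘ₗ antipode k) = 1 := by
  have := map_mul (postcomp F) (toConv .id) (toConv (antipode k (A := C)))
  rw [LinearMap.id_mul_antipode, map_one] at this
  exact this.symm

theorem toConv_comp_antipode_of_mul_eq {R : Type*} [Ring R] [Algebra k R] {F F₁ F₂ : C →ₐ[k] R}
    (h : toConv F₁.toLinearMap * toConv F₂.toLinearMap = toConv F.toLinearMap) :
    toConv (F.toLinearMap ∘ₗ antipode k) =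
      toConv (F₂.toLinearMap ∘ₗ antipode k) * toConv (F₁.toLinearMap ∘ₗ antipode k) := by
  refine (left_inv_eq_right_inv ?_ (toConv_mul_comp_antipode F)).symm
  rw [← h, mul_assoc, ← mul_assoc (toConv (F₁.toLinearMap ∘ₗ _)), toConv_comp_antipode_mul, one_mul,
    toConv_comp_antipode_mul]

/-- The algebra map `r ↦ r ⊗ 1`. -/
noncomputable abbrev inl (k R A : Type*) [Field k] [Ring R] [Algebra k R] [Ring A] [Algebra k A] :
    R →ₐ[k] R ⊗[k] A :=
  Algebra.TensorProduct.includeLeft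

/-- The algebra map `a ↦ 1 ⊗ a`. -/
noncomputable abbrev inr (k R A : Type*) [Field k] [Ring R] [Algebra k R] [Ring A] [Algebra k A] :
    A →ₐ[k] R ⊗[k] A :=
  Algebra.TensorProduct.includeRight

variable (k C) in
theorem toConv_inl_mul_inr :
    toConv (inl k C C).toLinearMap * toConv (inr k C C).toLinearMap = toConv comul := by
  refine WithConv.ext (LinearMap.ext fun c => ?_)
  rw [(ℛ k c).convMul_apply]
  simp [(ℛ k c).eq]

theorem toConv_inl_mul_inr_comp {R : Type*} [Ring R] [Algebra k R] (F : C ⊗[k] C →ₐ[k] R) :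
    toConv (F.comp (inl k C C)).toLinearMap * toConv (F.comp (inr k C C)).toLinearMap =
      toConv (F.toLinearMap ∘ₗ comul) := by
  rw [← postcomp_toConv, ← toConv_inl_mul_inr, map_mul]
  rfl

variable (k C) in
theorem toConv_comul_antipode_mul_inl :
    toConv (comul ∘ₗ antipode k) * toConv (inl k C C).toLinearMap =
      toConv ((inr k C C).toLinearMap ∘ₗ antipode k) := by
  have hinl : toConv (comul (R := k) (A := C)) * toConv ((inr k C C).toLinearMap ∘ₗ antipode k) =
      toConv (inl k C C).toLinearMap := by
    rw [← toConv_inl_mul_inr, mul_assoc, toConv_mul_comp_antipode, mul_one]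
  rw [← hinl, ← mul_assoc]
  exact (congrArg (· * _) (toConv_comp_antipode_mul (Bialgebra.comulAlgHom k C))).trans (one_mul _)

theorem comul_antipode (c : C) : comul (R := k) (antipode k c) =
    TensorProduct.map (antipode k) (antipode k) (TensorProduct.comm k C C (comul c)) := by
  have hanti := toConv_comp_antipode_of_mul_eq (F := Bialgebra.comulAlgHom k C)
    (toConv_inl_mul_inr k C)
  refine (LinearMap.congr_fun (congrArg ofConv hanti) c).trans ?_
  exact LinearMap.congr_fun
    (f := LinearMap.mul' k _ ∘ₗ TensorProduct.map ((inr k C C).toLinearMap ∘ₗ antipode k)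
      ((inl k C C).toLinearMap ∘ₗ antipode k))
    (g := TensorProduct.map (antipode k) (antipode k) ∘ₗ (TensorProduct.comm k C C).toLinearMap)
    (by ext; simp) (comul c)

end Antipode

section HaarAntipode

variable {k C : Type u} [Field k] [Ring C] [HopfAlgebra k C] {h : C →ₗ[k] k}

theorem IsHaarFunctional.antipode_conv (hh : IsHaarFunctional h) :
    toConv (antipode k) * toConv (Algebra.linearMap k C ∘ₗ h ∘ₗ antipode k) =
      toConv (Algebra.linearMap k C ∘ₗ h ∘ₗ antipode k) := by
  refine WithConv.ext (LinearMap.ext fun c => ?_)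
  calc _ = leftTranslate h (antipode k c) := by
        rw [leftTranslate, LinearMap.comp_apply, comul_antipode]
        exact LinearMap.congr_fun
          (f := LinearMap.mul' k C ∘ₗ TensorProduct.map (antipode k)
            (Algebra.linearMap k C ∘ₗ h ∘ₗ antipode k))
          (g := sliceLeft h ∘ₗ TensorProduct.map (antipode k) (antipode k) ∘ₗ
            (TensorProduct.comm k C C).toLinearMap)
          (by ext; simp [Algebra.algebraMap_eq_smul_one]) (comul c)
    _ = _ := by simp [hh.leftTranslate_apply, Algebra.algebraMap_eq_smul_one]

theorem IsHaarFunctional.conv_comp_antipode (hh : IsHaarFunctional h) (ψ : C →ₗ[k] k) :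
    ψ ⋆ (h ∘ₗ antipode k) = ψ 1 • (h ∘ₗ antipode k) := by
  have hid : toConv .id * toConv (Algebra.linearMap k C ∘ₗ h ∘ₗ antipode k) =
      toConv (Algebra.linearMap k C ∘ₗ h ∘ₗ antipode k) := by
    conv_lhs => rw [← hh.antipode_conv, ← mul_assoc, LinearMap.id_mul_antipode, one_mul]
  ext c
  calc (ψ ⋆ (h ∘ₗ antipode k)) c
      = ψ (((LinearMap.id : C →ₗ[k] C) ⋆ (Algebra.linearMap k C ∘ₗ h ∘ₗ antipode k)) c) :=
        LinearMap.congr_fun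
          (f := LinearMap.mul' k k ∘ₗ TensorProduct.map ψ (h ∘ₗ antipode k))
          (g := ψ ∘ₗ LinearMap.mul' k C ∘ₗ
            TensorProduct.map .id (Algebra.linearMap k C ∘ₗ h ∘ₗ antipode k))
          (by ext; simp [Algebra.algebraMap_eq_smul_one, mul_comm]) (comul c)
    _ = _ := by rw [hid]; simp [Algebra.algebraMap_eq_smul_one, mul_comm]

theorem IsHaarFunctional.comp_antipode (hh : IsHaarFunctional h) : h ∘ₗ antipode k = h := by
  have := hh.conv (h ∘ₗ antipode k)
  rwa [hh.conv_comp_antipode, hh.map_one, one_smul, LinearMap.comp_apply, antipode_one, hh.map_one,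
    one_smul] at this

theorem IsHaarFunctional.conv_left (hh : IsHaarFunctional h) (ψ : C →ₗ[k] k) :
    ψ ⋆ h = ψ 1 • h := by
  have := hh.conv_comp_antipode ψ
  rwa [hh.comp_antipode] at this

theorem IsHaarFunctional.act_comul (hh : IsHaarFunctional h) (c : C) :
    act comul h c = h c • 1 :=
  eq_of_forall_dual fun ψ => by
    rw [apply_act_comul, hh.conv_left, map_smul, LinearMap.smul_apply, smul_eq_mul, smul_eq_mul,
      mul_comm]

/-- The functionals `x ↦ h(x S(c))`. -/
noncomputable def pairing (h : C →ₗ[k] k) : C →ₗ[k] C →ₗ[k] k :=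
  (LinearMap.mul k C).flip.compr₂ h ∘ₗ antipode k

theorem pairing_apply (h : C →ₗ[k] k) (c x : C) : pairing h c x = h (x * antipode k c) :=
  rfl

theorem IsHaarFunctional.sliceRight_comul_mul (hh : IsHaarFunctional h) (x c : C) :
    sliceRight h (comul x * (1 ⊗ₜ[k] antipode k c)) = leftTranslate ((pairing h).flip x) c := by
  have hmul (z : C ⊗[k] C) (a : C) : sliceRight h (z * a ⊗ₜ[k] 1) = sliceRight h z * a :=
    LinearMap.congr_fun (f := sliceRight h ∘ₗ (LinearMap.mul k _).flip (a ⊗ₜ[k] 1))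
      (g := (LinearMap.mul k C).flip a ∘ₗ sliceRight h) (by ext; simp) z
  have hsum : 1 ⊗ₜ[k] antipode k c =
      ∑ i ∈ (ℛ k c).index, comul (antipode k ((ℛ k c).left i)) * (ℛ k c).right i ⊗ₜ[k] 1 := by
    have := LinearMap.congr_fun (congrArg ofConv (toConv_comul_antipode_mul_inl k C)) c
    exact this.symm.trans ((ℛ k c).convMul_apply _ _)
  calc sliceRight h (comul x * (1 ⊗ₜ[k] antipode k c))
      = ∑ i ∈ (ℛ k c).index, h (x * antipode k ((ℛ k c).left i)) • (ℛ k c).right i := by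
        simp_rw [hsum, Finset.mul_sum, map_sum, ← mul_assoc, ← Bialgebra.comul_mul, hmul,
          ← act_apply, hh.act_comul, smul_mul_assoc, one_mul]
    _ = leftTranslate ((pairing h).flip x) c := by
        rw [leftTranslate, LinearMap.comp_apply, ← (ℛ k c).eq, map_sum]
        simp only [sliceLeft_tmul, LinearMap.flip_apply, pairing_apply]

theorem IsHaarFunctional.conv_pairing (hh : IsHaarFunctional h) (ψ : C →ₗ[k] k) (c : C) :
    ψ ⋆ pairing h c = pairing h (act comul ψ c) := by
  ext x
  calc (ψ ⋆ pairing h c) x = ψ (sliceRight h (comul x * (1 ⊗ₜ[k] antipode k c))) :=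
        LinearMap.congr_fun
          (f := LinearMap.mul' k k ∘ₗ TensorProduct.map ψ (pairing h c))
          (g := ψ ∘ₗ sliceRight h ∘ₗ (LinearMap.mul k _).flip (1 ⊗ₜ[k] antipode k c))
          (by ext; simp [pairing_apply, mul_comm]) (comul x)
    _ = pairing h (act comul ψ c) x := by
        rw [hh.sliceRight_comul_mul, apply_leftTranslate, ← apply_act_comul]
        rfl

end HaarAntipode

section BialgHom

variable {k A B : Type u} [Field k] [Ring A] [HopfAlgebra k A] [Ring B] [HopfAlgebra k B]

/-- Composition with a bialgebra map, as a homomorphism of convolution monoids. -/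
noncomputable def precomp {R : Type*} [Ring R] [Algebra k R] (π : A →ₐc[k] B) :
    WithConv (B →ₗ[k] R) →* WithConv (A →ₗ[k] R) where
  toFun f := toConv (f.ofConv ∘ₗ (π : A →ₗ[k] B))
  map_one' := WithConv.ext (LinearMap.ext fun _ => by simp)
  map_mul' f g := congrArg toConv (LinearMap.convMul_comp_coalgHom_distrib f g (π : A →ₗc[k] B))

theorem precomp_toConv {R : Type*} [Ring R] [Algebra k R] (π : A →ₐc[k] B) (f : B →ₗ[k] R) :
    precomp π (toConv f) = toConv (f ∘ₗ (π : A →ₗ[k] B)) :=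
  rfl

theorem comp_antipode_bialgHom (π : A →ₐc[k] B) :
    (π : A →ₗ[k] B) ∘ₗ antipode k = antipode k ∘ₗ (π : A →ₗ[k] B) := by
  have hleft : toConv (antipode k ∘ₗ (π : A →ₗ[k] B)) * toConv (π : A →ₗ[k] B) = 1 := by
    have := map_mul (precomp π) (toConv (antipode k (A := B))) (toConv .id)
    rw [LinearMap.antipode_mul_id, map_one] at this
    exact this.symm
  exact congrArg ofConv
    (left_inv_eq_right_inv hleft (toConv_mul_comp_antipode (π : A →ₐ[k] B))).symm

end BialgHom

section Adjoint

variable {k A B : Type u} [Field k] [Ring A] [HopfAlgebra k A] [Ring B] [HopfAlgebra k B]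

theorem toConv_rTensor_comp_adR {R : Type u} [Ring R] [Algebra k R] (F : A →ₗ[k] R) :
    toConv (F.rTensor A ∘ₗ adR k A) = toConv ((inr k R A).toLinearMap ∘ₗ antipode k) *
      (toConv ((inl k R A).toLinearMap ∘ₗ F) * toConv (inr k R A).toLinearMap) := by
  refine WithConv.ext (LinearMap.ext fun a => ?_)
  trans (LinearMap.mul' k (R ⊗[k] A) ∘ₗ TensorProduct.map ((inr k R A).toLinearMap ∘ₗ antipode k)
    (LinearMap.mul' k (R ⊗[k] A) ∘ₗ TensorProduct.map ((inl k R A).toLinearMap ∘ₗ F)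
      (inr k R A).toLinearMap)) (comul2 k A a)
  · exact LinearMap.congr_fun
      (f := F.rTensor A ∘ₗ (LinearMap.mul' k A).lTensor A ∘ₗ
        (TensorProduct.assoc k A A A).toLinearMap ∘ₗ
        (TensorProduct.comm k A A).toLinearMap.rTensor A ∘ₗ
        (TensorProduct.assoc k A A A).symm.toLinearMap ∘ₗ
        (antipode (R := k) (A := A)).rTensor (A ⊗[k] A)) (by ext; simp) (comul2 k A a)
  · exact congrArg (LinearMap.mul' k (R ⊗[k] A))
      (LinearMap.congr_fun (LinearMap.map_comp_lTensor _ _ _ comul) (comul a))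

theorem toConv_adR : toConv (adR k A) = toConv ((inr k A A).toLinearMap ∘ₗ antipode k) *
    (toConv (inl k A A).toLinearMap * toConv (inr k A A).toLinearMap) := by
  simpa using toConv_rTensor_comp_adR (k := k) (LinearMap.id (R := k) (M := A))

theorem adR_one : adR k A 1 = 1 ⊗ₜ[k] 1 := by
  simp [adR, comul2, Algebra.TensorProduct.one_def]

theorem toConv_comp_adR {R : Type u} [Ring R] [Algebra k R] (F : A ⊗[k] A →ₐ[k] R) :
    toConv (F.toLinearMap ∘ₗ adR k A) = toConv ((F.comp (inr k A A)).toLinearMap ∘ₗ antipode k) *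
      (toConv (F.comp (inl k A A)).toLinearMap * toConv (F.comp (inr k A A)).toLinearMap) := by
  rw [← postcomp_toConv, toConv_adR, map_mul, map_mul]
  rfl

theorem adR_bialgHom (π : A →ₐc[k] B) (a : A) : adR k B (π a) =
    TensorProduct.map (π : A →ₗ[k] B) (π : A →ₗ[k] B) (adR k A a) := by
  let F : A ⊗[k] A →ₐ[k] B ⊗[k] B :=
    Algebra.TensorProduct.map (π : A →ₐ[k] B) (π : A →ₐ[k] B)
  have hS : precomp π (toConv ((inr k B B).toLinearMap ∘ₗ antipode k)) =
      toConv ((F.comp (inr k A A)).toLinearMap ∘ₗ antipode k) :=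
    WithConv.ext (LinearMap.ext fun x => by
      simpa [precomp_toConv, F] using congrArg (fun y : B => (1 : B) ⊗ₜ[k] y)
        (LinearMap.congr_fun (comp_antipode_bialgHom π) x).symm)
  have hinl : precomp π (toConv (inl k B B).toLinearMap) =
      toConv (F.comp (inl k A A)).toLinearMap :=
    WithConv.ext (LinearMap.ext fun x => by simp [precomp_toConv, F])
  have hinr : precomp π (toConv (inr k B B).toLinearMap) =
      toConv (F.comp (inr k A A)).toLinearMap :=
    WithConv.ext (LinearMap.ext fun x => by simp [precomp_toConv, F])
  have : precomp π (toConv (adR k B)) = toConv (F.toLinearMap ∘ₗ adR k A) := by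
    rw [toConv_adR, map_mul, map_mul, hS, hinl, hinr, toConv_comp_adR]
  exact LinearMap.congr_fun (congrArg ofConv this) a

variable (k A) in
theorem adR_coassoc : (adR k A).rTensor A ∘ₗ adR k A =
    (TensorProduct.assoc k A A A).symm.toLinearMap ∘ₗ comul.lTensor A ∘ₗ adR k A := by
  let L : A ⊗[k] A →ₐ[k] (A ⊗[k] A) ⊗[k] A := inl k (A ⊗[k] A) A
  let P : A ⊗[k] A →ₐ[k] (A ⊗[k] A) ⊗[k] A :=
    (Algebra.TensorProduct.assoc k k k A A A).symm.toAlgHom.comp (inr k A (A ⊗[k] A))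
  let Q : A ⊗[k] A →ₐ[k] (A ⊗[k] A) ⊗[k] A :=
    (Algebra.TensorProduct.assoc k k k A A A).symm.toAlgHom.comp
      (Algebra.TensorProduct.map (AlgHom.id k A) (Bialgebra.comulAlgHom k A))
  have hPL : P.comp (inl k A A) = L.comp (inr k A A) := by ext; simp [P, L]
  have hPr : P.comp (inr k A A) = inr k (A ⊗[k] A) A := by
    ext; simp [P, Algebra.TensorProduct.one_def]
  have hQL : Q.comp (inl k A A) = L.comp (inl k A A) := by
    ext; simp [Q, L, Algebra.TensorProduct.one_def]
  have hQP : (Q.comp (inr k A A)).toLinearMap = P.toLinearMap ∘ₗ comul := by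
    ext; simp [P, Q]
  have hmul : toConv (L.comp (inr k A A)).toLinearMap *
      toConv (inr k (A ⊗[k] A) A).toLinearMap = toConv (Q.comp (inr k A A)).toLinearMap := by
    rw [hQP, ← hPL, ← hPr, toConv_inl_mul_inr_comp]
  have : toConv ((adR k A).rTensor A ∘ₗ adR k A) = toConv (Q.toLinearMap ∘ₗ adR k A) := by
    calc toConv ((adR k A).rTensor A ∘ₗ adR k A)
        = toConv ((inr k (A ⊗[k] A) A).toLinearMap ∘ₗ antipode k) *
            (toConv (L.toLinearMap ∘ₗ adR k A) * toConv (inr k (A ⊗[k] A) A).toLinearMap) :=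
          toConv_rTensor_comp_adR (adR k A)
      _ = toConv ((inr k (A ⊗[k] A) A).toLinearMap ∘ₗ antipode k) *
            toConv ((L.comp (inr k A A)).toLinearMap ∘ₗ antipode k) *
            (toConv (L.comp (inl k A A)).toLinearMap *
              (toConv (L.comp (inr k A A)).toLinearMap *
                toConv (inr k (A ⊗[k] A) A).toLinearMap)) := by
          simp only [toConv_comp_adR, mul_assoc]
      _ = toConv (Q.toLinearMap ∘ₗ adR k A) := by
          rw [← toConv_comp_antipode_of_mul_eq hmul, hmul, ← hQL, toConv_comp_adR]
  exact congrArg ofConv this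

theorem counit_adR (a : A) :
    TensorProduct.rid k A ((counit (R := k) (A := A)).lTensor A (adR k A a)) = a := by
  let E : A ⊗[k] A →ₐ[k] A := (Algebra.TensorProduct.rid k k A).toAlgHom.comp
    (Algebra.TensorProduct.map (AlgHom.id k A) (Bialgebra.counitAlgHom k A))
  have hS : toConv ((E.comp (inr k A A)).toLinearMap ∘ₗ antipode k) = 1 :=
    WithConv.ext (LinearMap.ext fun x => by simp [E, Algebra.algebraMap_eq_smul_one])
  have hinl : toConv (E.comp (inl k A A)).toLinearMap = toConv .id :=
    WithConv.ext (LinearMap.ext fun x => by simp [E])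
  have hinr : toConv (E.comp (inr k A A)).toLinearMap = 1 :=
    WithConv.ext (LinearMap.ext fun x => by simp [E, Algebra.algebraMap_eq_smul_one])
  have hE := toConv_comp_adR E
  rw [hS, hinl, hinr, one_mul, mul_one] at hE
  exact LinearMap.congr_fun (congrArg ofConv hE) a

variable (k A) in
theorem isComod_adR : IsComod k A (adR k A) where
  coassoc a := LinearMap.congr_fun (adR_coassoc k A) a
  counit := counit_adR

end Adjoint

section ComodHom

variable {k C V W : Type u} [Field k] [AddCommGroup C] [Module k C]
  [AddCommGroup V] [Module k V] [AddCommGroup W] [Module k W]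
  {ρ : V →ₗ[k] V ⊗[k] C} {σ : W →ₗ[k] W ⊗[k] C} {f : V →ₗ[k] W}

theorem IsSubcomod.exists_coact {U : Submodule k W} (hU : IsSubcomod k C σ U) :
    ∃ ρ : U →ₗ[k] U ⊗[k] C, IsComodHom k C ρ σ U.subtype := by
  obtain ⟨q, hq⟩ := U.subtype.exists_leftInverse_of_injective (Submodule.ker_subtype U)
  refine ⟨q.rTensor C ∘ₗ σ ∘ₗ U.subtype, LinearMap.ext fun u => ?_⟩
  obtain ⟨z, hz⟩ := hU u u.2
  simp only [LinearMap.comp_apply, Submodule.subtype_apply]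
  rw [← hz, ← LinearMap.comp_apply (q.rTensor C), ← LinearMap.rTensor_comp, hq,
    LinearMap.rTensor_id, LinearMap.id_apply]

theorem IsComodHom.isSubcomod_map_iff (h : IsComodHom k C ρ σ f) (hf : Function.Injective f)
    {U : Submodule k V} : IsSubcomod k C σ (U.map f) ↔ IsSubcomod k C ρ U := by
  simp only [isSubcomod_iff_act, Submodule.mem_map, forall_exists_index, and_imp,
    forall_apply_eq_imp_iff₂, h.map_act, hf.eq_iff, exists_eq_right]

theorem IsSimpleSubcomod.exists_coact {U : Submodule k W} (hU : IsSimpleSubcomod k C σ U) :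
    ∃ ρ : U →ₗ[k] U ⊗[k] C, IsComodHom k C ρ σ U.subtype ∧ IsSimpleComod k C ρ := by
  obtain ⟨ρ, h⟩ := hU.1.exists_coact
  have hinj := Submodule.map_injective_of_injective U.injective_subtype
  have hmap {U' : Submodule k U} := h.isSubcomod_map_iff U.injective_subtype (U := U')
  refine ⟨ρ, h, hmap.1 (by simpa using hU.1), fun htop => hU.2.1 ?_, fun U' _ hU' => ?_⟩
  · simpa using congrArg (Submodule.map U.subtype) htop
  · exact (hU.2.2 (U'.map U.subtype) (Submodule.map_subtype_le U U') (hmap.2 hU')).imp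
      (fun h => hinj (by simpa using h)) fun h => hinj (by simpa using h)

theorem act_cores {D : Type u} [AddCommGroup D] [Module k D] (π : C →ₗ[k] D)
    (ρ : V →ₗ[k] V ⊗[k] C) (φ : D →ₗ[k] k) : act (cores k C π ρ) φ = act ρ (φ ∘ₗ π) :=
  LinearMap.ext fun v => sliceRight_lTensor π φ (ρ v)

variable [Coalgebra k C]

theorem IsComod.of_surjective (hρ : IsComod k C ρ) (hf : Function.Surjective f)
    (h : IsComodHom k C ρ σ f) : IsComod k C σ := by
  refine isComod_of_act (fun φ ψ => LinearMap.ext fun w => ?_) (LinearMap.ext fun w => ?_) <;>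
    obtain ⟨v, rfl⟩ := hf w
  · rw [Module.End.mul_apply, h.map_act, h.map_act, h.map_act, hρ.act_conv, Module.End.mul_apply]
  · rw [h.map_act, hρ.act_counit, Module.End.one_apply, Module.End.one_apply]

theorem IsComod.of_injective (hσ : IsComod k C σ) (hf : Function.Injective f)
    (h : IsComodHom k C ρ σ f) : IsComod k C ρ := by
  refine isComod_of_act (fun φ ψ => LinearMap.ext fun v => hf ?_) (LinearMap.ext fun v => hf ?_)
  · rw [Module.End.mul_apply, ← h.map_act, ← h.map_act, ← h.map_act, hσ.act_conv,
      Module.End.mul_apply]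
  · rw [← h.map_act, hσ.act_counit, Module.End.one_apply, Module.End.one_apply]

theorem IsComod.cores {D : Type u} [AddCommGroup D] [Module k D] [Coalgebra k D]
    (hρ : IsComod k C ρ) (T : C →ₗc[k] D) : IsComod k D (cores k C (T : C →ₗ[k] D) ρ) := by
  refine isComod_of_act (fun φ ψ => ?_) ?_
  · rw [act_cores, act_cores, act_cores, ← hρ.act_conv]
    exact congrArg (act ρ) (LinearMap.convMul_comp_coalgHom_distrib (toConv φ) (toConv ψ) T)
  · rw [act_cores, CoalgHomClass.counit_comp, hρ.act_counit]

end ComodHom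

section Invariants

variable {k A B V : Type u} [Field k] [AddCommGroup V] [Module k V] [Ring B]
  [Bialgebra k B]

/-- The subspace of invariant vectors of a comodule. -/
noncomputable def invariants (σ : V →ₗ[k] V ⊗[k] B) : Submodule k V :=
  LinearMap.ker (σ - (TensorProduct.mk k V B).flip 1)

theorem mem_invariants {σ : V →ₗ[k] V ⊗[k] B} {v : V} :
    v ∈ invariants σ ↔ IsInvariant k B σ v := by
  simp [invariants, IsInvariant, sub_eq_zero]

theorem isInvariant_iff_act {σ : V →ₗ[k] V ⊗[k] B} {v : V} :
    IsInvariant k B σ v ↔ ∀ φ : B →ₗ[k] k, act σ φ v = φ 1 • v := by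
  refine ⟨fun h φ => ?_, fun h => eq_of_forall_sliceRight fun φ => ?_⟩
  · rw [act_apply, h, sliceRight_tmul]
  · rw [sliceRight_tmul, ← h φ, act_apply]

theorem IsInvariant.act_comp_comul [AddCommGroup A] [Module k A] [Coalgebra k A] {π : A →ₗ[k] B}
    {ρ : V →ₗ[k] V ⊗[k] A} (hρ : IsComod k A ρ) {v : V} (hv : IsInvariant k B (cores k A π ρ) v)
    (Θ : A ⊗[k] B →ₗ[k] k) :
    act ρ (Θ ∘ₗ π.lTensor A ∘ₗ comul) v = act ρ (Θ ∘ₗ (TensorProduct.mk k A B).flip 1) v := by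
  calc act ρ (Θ ∘ₗ π.lTensor A ∘ₗ comul) v
      = sliceRight (Θ ∘ₗ π.lTensor A) (TensorProduct.assoc k V A A (ρ.rTensor A (ρ v))) := by
        rw [act_apply, hρ.assoc_rTensor, sliceRight_lTensor, LinearMap.comp_assoc]
    _ = sliceRight Θ (TensorProduct.assoc k V A B (ρ.rTensor B (π.lTensor V (ρ v)))) := by
        have hπρ := LinearMap.congr_fun ((LinearMap.rTensor_comp_lTensor _ ρ π).trans
          (LinearMap.lTensor_comp_rTensor _ ρ π).symm) (ρ v)
        rw [← sliceRight_lTensor]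
        refine congrArg (sliceRight Θ) (Eq.trans ?_ (congrArg _ hπρ.symm))
        rw [LinearMap.comp_apply, LinearMap.lTensor_tensor]
        simp
    _ = sliceRight Θ (TensorProduct.assoc k V A B (ρ v ⊗ₜ[k] 1)) := by
        rw [show π.lTensor V (ρ v) = v ⊗ₜ[k] 1 from hv, LinearMap.rTensor_tmul]
    _ = act ρ (Θ ∘ₗ (TensorProduct.mk k A B).flip 1) v :=
        LinearMap.congr_fun
          (f := sliceRight Θ ∘ₗ (TensorProduct.assoc k V A B).toLinearMap ∘ₗ
            (TensorProduct.mk k _ B).flip 1)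
          (g := sliceRight (Θ ∘ₗ (TensorProduct.mk k A B).flip 1)) (by ext; simp) (ρ v)

end Invariants

section RightNormal

variable {k A B V : Type u} [Field k] [Ring A] [HopfAlgebra k A] [Ring B] [HopfAlgebra k B]
  [AddCommGroup V] [Module k V] {π : A →ₐc[k] B} {σ : B →ₗ[k] B ⊗[k] A}

theorem IsComodHom.coact_one (hσ : IsComodHom k A (adR k A) σ (π : A →ₗ[k] B)) :
    σ 1 = 1 ⊗ₜ[k] 1 := by
  have := LinearMap.congr_fun hσ 1
  simpa [adR_one] using this

-- In Sweedler notation: `(1 ⊗ a₁) σ(π(a₂)) = π(a₁) ⊗ a₂`.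
theorem toConv_inr_mul_comp_of_isComodHom (hσ : IsComodHom k A (adR k A) σ (π : A →ₗ[k] B)) :
    toConv (inr k B A).toLinearMap * toConv (σ ∘ₗ (π : A →ₗ[k] B)) =
      toConv ((inl k B A).toLinearMap ∘ₗ (π : A →ₗ[k] B)) * toConv (inr k B A).toLinearMap := by
  rw [show σ ∘ₗ (π : A →ₗ[k] B) = _ from hσ, toConv_rTensor_comp_adR, ← mul_assoc,
    toConv_mul_comp_antipode, one_mul]

theorem isSubcomod_invariants_cores (hσ : IsComodHom k A (adR k A) σ (π : A →ₗ[k] B))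
    {ρ : V →ₗ[k] V ⊗[k] A} (hρ : IsComod k A ρ) :
    IsSubcomod k A ρ (invariants (cores k A (π : A →ₗ[k] B) ρ)) := by
  refine isSubcomod_iff_act.2 fun ψ v hv => ?_
  rw [mem_invariants] at hv
  rw [mem_invariants, isInvariant_iff_act]
  intro φ
  let Θ' : (B ⊗[k] A) ⊗[k] (B ⊗[k] A) →ₗ[k] k :=
    LinearMap.mul' k k ∘ₗ TensorProduct.map φ ψ ∘ₗ LinearMap.mul' k (B ⊗[k] A)
  let Θ : A ⊗[k] B →ₗ[k] k := Θ' ∘ₗ TensorProduct.map (inr k B A).toLinearMap σ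
  have hconv : (φ ∘ₗ (π : A →ₗ[k] B)) ⋆ ψ = Θ ∘ₗ (π : A →ₗ[k] B).lTensor A ∘ₗ comul := by
    have := congrArg (fun f => LinearMap.mul' k k ∘ₗ TensorProduct.map φ ψ ∘ₗ ofConv f)
      (toConv_inr_mul_comp_of_isComodHom hσ)
    ext a
    refine Eq.trans ?_ ((LinearMap.congr_fun this a).symm.trans ?_)
    · exact LinearMap.congr_fun
        (f := LinearMap.mul' k k ∘ₗ TensorProduct.map (φ ∘ₗ (π : A →ₗ[k] B)) ψ)
        (g := LinearMap.mul' k k ∘ₗ TensorProduct.map φ ψ ∘ₗ LinearMap.mul' k (B ⊗[k] A) ∘ₗ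
          TensorProduct.map ((inl k B A).toLinearMap ∘ₗ (π : A →ₗ[k] B)) (inr k B A).toLinearMap)
        (by ext; simp) (comul a)
    · exact LinearMap.congr_fun
        (f := Θ' ∘ₗ TensorProduct.map (inr k B A).toLinearMap (σ ∘ₗ (π : A →ₗ[k] B)))
        (g := Θ ∘ₗ (π : A →ₗ[k] B).lTensor A)
        (by ext; simp [Θ, Θ']) (comul a)
  have hone : Θ ∘ₗ (TensorProduct.mk k A B).flip 1 = φ 1 • ψ := by
    ext a
    simp [Θ, Θ', hσ.coact_one, ← Algebra.TensorProduct.one_def]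
  rw [act_cores, ← Module.End.mul_apply, ← hρ.act_conv, hconv, hv.act_comp_comul hρ, hone, map_smul,
    LinearMap.smul_apply]

theorem cores_eq_adR_of_isComodHom (hs : Function.Surjective π)
    (hσ : IsComodHom k A (adR k A) σ (π : A →ₗ[k] B)) :
    cores k A (π : A →ₗ[k] B) σ = adR k B := by
  ext b
  obtain ⟨a, rfl⟩ := hs b
  rw [adR_bialgHom, cores, LinearMap.comp_apply, show σ (π a) = _ from LinearMap.congr_fun hσ a]
  exact LinearMap.congr_fun (LinearMap.lTensor_comp_rTensor _ _ _) (adR k A a)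

end RightNormal

section Maschke

variable {k C V : Type u} [Field k] [Ring C] [HopfAlgebra k C] [AddCommGroup V] [Module k V]
  {h : C →ₗ[k] k} {ρ : V →ₗ[k] V ⊗[k] C}

/-- The averaging operator `v ⊗ c ↦ h(v₁ S(c)) v₀` on a comodule. -/
noncomputable def averageTensor (h : C →ₗ[k] k) (ρ : V →ₗ[k] V ⊗[k] C) : V ⊗[k] C →ₗ[k] V :=
  TensorProduct.lift (act ρ ∘ₗ pairing h).flip

/-- The average `v ↦ h(f(v₀)₁ S(v₁)) f(v₀)₀` of an endomorphism `f` of a comodule. -/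
noncomputable def average (h : C →ₗ[k] k) (ρ : V →ₗ[k] V ⊗[k] C) (f : Module.End k V) :
    Module.End k V :=
  averageTensor h ρ ∘ₗ f.rTensor C ∘ₗ ρ

theorem IsHaarFunctional.act_averageTensor (hh : IsHaarFunctional h) (hρ : IsComod k C ρ)
    (ψ : C →ₗ[k] k) (z : V ⊗[k] C) :
    act ρ ψ (averageTensor h ρ z) = averageTensor h ρ ((act comul ψ).lTensor V z) :=
  LinearMap.congr_fun (f := act ρ ψ ∘ₗ averageTensor h ρ)
    (g := averageTensor h ρ ∘ₗ (act comul ψ).lTensor V)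
    (TensorProduct.ext' fun v c => by
      simp [averageTensor, ← Module.End.mul_apply, ← hρ.act_conv, hh.conv_pairing]) z

theorem IsHaarFunctional.act_average (hh : IsHaarFunctional h) (hρ : IsComod k C ρ)
    (f : Module.End k V) (ψ : C →ₗ[k] k) (v : V) :
    act ρ ψ (average h ρ f v) = average h ρ f (act ρ ψ v) := by
  rw [average, LinearMap.comp_apply, hh.act_averageTensor hρ, LinearMap.comp_apply,
    LinearMap.comp_apply, LinearMap.comp_apply, hρ.coact_act]
  exact congrArg (averageTensor h ρ) (LinearMap.congr_fun
    ((LinearMap.lTensor_comp_rTensor _ f _).trans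
      (LinearMap.rTensor_comp_lTensor _ f _).symm) (ρ v))

theorem IsHaarFunctional.averageTensor_coact (hh : IsHaarFunctional h) (hρ : IsComod k C ρ)
    (v : V) : averageTensor h ρ (ρ v) = v := by
  have hS : (h ∘ₗ LinearMap.mul' k C ∘ₗ (antipode k).lTensor C) ∘ₗ comul = Coalgebra.counit := by
    ext c
    simp [Algebra.algebraMap_eq_smul_one, hh.map_one]
  have hav (w : V) (c : C) : averageTensor h ρ (w ⊗ₜ[k] c) =
      sliceRight (h ∘ₗ LinearMap.mul' k C ∘ₗ (antipode k).lTensor C)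
        (TensorProduct.assoc k V C C (ρ w ⊗ₜ[k] c)) :=
    LinearMap.congr_fun (f := sliceRight (pairing h c))
      (g := sliceRight (h ∘ₗ LinearMap.mul' k C ∘ₗ (antipode k).lTensor C) ∘ₗ
        (TensorProduct.assoc k V C C).toLinearMap ∘ₗ (TensorProduct.mk k _ C).flip c)
      (by ext; simp [pairing_apply]) (ρ w)
  calc averageTensor h ρ (ρ v)
      = sliceRight (h ∘ₗ LinearMap.mul' k C ∘ₗ (antipode k).lTensor C)
          (TensorProduct.assoc k V C C (ρ.rTensor C (ρ v))) :=
        LinearMap.congr_fun (g := sliceRight (h ∘ₗ LinearMap.mul' k C ∘ₗ (antipode k).lTensor C) ∘ₗ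
          (TensorProduct.assoc k V C C).toLinearMap ∘ₗ ρ.rTensor C) (TensorProduct.ext' hav) (ρ v)
    _ = act ρ Coalgebra.counit v := by rw [hρ.assoc_rTensor, sliceRight_lTensor, hS]; rfl
    _ = v := by rw [hρ.act_counit]; rfl

theorem IsHaarFunctional.isProj_average (hh : IsHaarFunctional h) (hρ : IsComod k C ρ)
    {U : Submodule k V} (hU : IsSubcomod k C ρ U) {p : Module.End k V} (hp : LinearMap.IsProj U p) :
    LinearMap.IsProj U (average h ρ p) where
  map_mem v := by
    have hle : LinearMap.range (averageTensor h ρ ∘ₗ p.rTensor C) ≤ U := by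
      rw [LinearMap.range_le_iff_comap, eq_top_iff, ← TensorProduct.span_tmul_eq_top,
        Submodule.span_le]
      rintro _ ⟨w, c, rfl⟩
      exact hU.act_mem _ (hp.map_mem w)
    exact hle ⟨ρ v, rfl⟩
  map_id u hu := by
    obtain ⟨z, hz⟩ := hU u hu
    have hpU : p ∘ₗ U.subtype = U.subtype := LinearMap.ext fun u => hp.map_id u u.2
    have hpu : p.rTensor C (ρ u) = ρ u := by
      rw [← hz, ← LinearMap.comp_apply, ← LinearMap.rTensor_comp, hpU]
    exact (congrArg (averageTensor h ρ) hpu).trans (hh.averageTensor_coact hρ u)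

theorem IsHaarFunctional.exists_isProj_commute_act (hh : IsHaarFunctional h) (hρ : IsComod k C ρ)
    {U : Submodule k V} (hU : IsSubcomod k C ρ U) :
    ∃ p : Module.End k V, LinearMap.IsProj U p ∧ ∀ ψ, Commute (act ρ ψ) p := by
  obtain ⟨q, hq⟩ := U.subtype.exists_leftInverse_of_injective (Submodule.ker_subtype U)
  have hp : LinearMap.IsProj U (U.subtype ∘ₗ q) :=
    ⟨fun v => (q v).2, fun u hu => congrArg Subtype.val (LinearMap.congr_fun hq ⟨u, hu⟩)⟩
  exact ⟨_, hh.isProj_average hρ hU hp, fun ψ => LinearMap.ext fun v => hh.act_average hρ _ ψ v⟩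

theorem IsHaarFunctional.isCosemisimple (hh : IsHaarFunctional h) : IsCosemisimple k C := by
  refine fun V _ _ ρ hρ => hρ.exists_iSupIndep_isSimpleSubcomod fun U hU => ?_
  obtain ⟨p, hp, hcomm⟩ := hh.exists_isProj_commute_act hρ hU
  refine ⟨LinearMap.ker p, isSubcomod_iff_act.2 fun ψ v hv => ?_, hp.isCompl⟩
  rw [LinearMap.mem_ker, ← Module.End.mul_apply, ← (hcomm ψ).eq, Module.End.mul_apply,
    LinearMap.mem_ker.1 hv, map_zero]

end Maschke

section AntipodeInjective

variable {k C : Type u} [Field k] [Ring C] [HopfAlgebra k C] {h : C →ₗ[k] k}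

theorem IsHaarFunctional.isSubcomod_ker_pairing (hh : IsHaarFunctional h) :
    IsSubcomod k C comul (LinearMap.ker (pairing h)) :=
  isSubcomod_iff_act.2 fun ψ c hc => by
    rw [LinearMap.mem_ker, ← hh.conv_pairing, LinearMap.mem_ker.1 hc]
    exact congrArg ofConv (mul_zero (toConv ψ))

theorem IsHaarFunctional.counit_eq_zero (hh : IsHaarFunctional h) {c : C} (hc : pairing h c = 0) :
    Coalgebra.counit (R := k) c = 0 := by
  have hker (x y : C) (hx : pairing h x = 0) : h (x * y) = 0 := by
    rw [← hh.comp_antipode, LinearMap.comp_apply, antipode_mul_antidistrib, ← pairing_apply, hx,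
      LinearMap.zero_apply]
  obtain ⟨z, hz⟩ := hh.isSubcomod_ker_pairing c hc
  have hzero : h ∘ₗ LinearMap.mul' k C ∘ₗ (antipode k).lTensor C ∘ₗ
      (LinearMap.ker (pairing h)).subtype.rTensor C = 0 :=
    TensorProduct.ext' fun x y => hker x _ x.2
  calc Coalgebra.counit c = h (LinearMap.mul' k C ((antipode k).lTensor C (comul c))) := by
        simp [Algebra.algebraMap_eq_smul_one, hh.map_one]
    _ = 0 := by rw [← hz]; exact LinearMap.congr_fun hzero z

theorem IsHaarFunctional.antipode_injective (hh : IsHaarFunctional h) :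
    Function.Injective (antipode k : C →ₗ[k] C) := by
  have hker : LinearMap.ker (pairing h) = ⊥ :=
    hh.isSubcomod_ker_pairing.eq_bot_of_counit_eq_zero fun _ hc => hh.counit_eq_zero hc
  refine (injective_iff_map_eq_zero _).2 fun c hc => LinearMap.ker_eq_bot'.1 hker c ?_
  ext x
  rw [pairing_apply, hc, mul_zero, map_zero, LinearMap.zero_apply]

end AntipodeInjective

section CoefficientSpace

variable {k C W : Type u} [Field k] [AddCommGroup C] [Module k C] [AddCommGroup W] [Module k W]

section Coaction

variable {σ : W →ₗ[k] W ⊗[k] C} {ψ : C →ₗ[k] k}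

theorem sliceLeft_coact_mem_coeffSpace (σ : W →ₗ[k] W ⊗[k] C) (φ : W →ₗ[k] k) (w : W) :
    sliceLeft φ (σ w) ∈ coeffSpace k C σ :=
  Submodule.mem_sInf.2 fun _ hD => mem_range_lTensor_subtype_iff.1 (hD w) φ

theorem act_eq_zero_iff : act σ ψ = 0 ↔ ∀ c ∈ coeffSpace k C σ, ψ c = 0 := by
  have hψ (φ : W →ₗ[k] k) (w : W) : φ (act σ ψ w) = ψ (sliceLeft φ (σ w)) := by
    rw [act_apply, apply_sliceRight, apply_sliceLeft]
  constructor
  · intro h c hc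
    have hle : coeffSpace k C σ ≤ LinearMap.ker ψ :=
      sInf_le fun w => mem_range_lTensor_subtype_iff.2 fun φ => by
        rw [LinearMap.mem_ker, ← hψ, h, LinearMap.zero_apply, map_zero]
    exact hle hc
  · refine fun h => LinearMap.ext fun w => eq_of_forall_dual (k := k) fun φ => ?_
    rw [hψ, h _ (sliceLeft_coact_mem_coeffSpace σ φ w), LinearMap.zero_apply, map_zero]

theorem mem_coeffSpace_of_forall {c : C} (h : ∀ ψ : C →ₗ[k] k, act σ ψ = 0 → ψ c = 0) :
    c ∈ coeffSpace k C σ := by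
  by_contra hc
  obtain ⟨ψ, hψc, hψ⟩ := exists_dual_eq_one hc
  exact one_ne_zero (hψc.symm.trans (h ψ (act_eq_zero_iff.2 hψ)))

end Coaction

variable [Coalgebra k C] {D : Submodule k C}

theorem IsSubcoalgebra.isSubcomod (hD : IsSubcoalgebra k C D) : IsSubcomod k C comul D := by
  intro x hx
  obtain ⟨z, hz⟩ := hD x hx
  refine ⟨D.subtype.lTensor D z, hz ▸ ?_⟩
  exact LinearMap.congr_fun (LinearMap.rTensor_comp_lTensor _ _ _) z

theorem IsSubcoalgebra.leftTranslate_mem (hD : IsSubcoalgebra k C D) (ψ : C →ₗ[k] k) {c : C}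
    (hc : c ∈ D) : leftTranslate ψ c ∈ D := by
  obtain ⟨z, hz⟩ := hD c hc
  refine mem_range_lTensor_subtype_iff.1 ⟨D.subtype.rTensor D z, ?_⟩ ψ
  exact (LinearMap.congr_fun (LinearMap.lTensor_comp_rTensor _ _ _) z).trans hz

theorem isSubcoalgebra_of_leftTranslate_mem (hD : IsSubcomod k C comul D)
    (hleft : ∀ ψ : C →ₗ[k] k, ∀ c ∈ D, leftTranslate ψ c ∈ D) : IsSubcoalgebra k C D := by
  intro x hx
  obtain ⟨z, hz⟩ := hD x hx
  obtain ⟨q, hq⟩ := D.subtype.exists_leftInverse_of_injective (Submodule.ker_subtype D)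
  obtain ⟨t, rfl⟩ := mem_range_lTensor_subtype_iff (D := D) (z := z) |>.2 fun φ => by
    have := hleft (φ ∘ₗ q) x hx
    rwa [leftTranslate, LinearMap.comp_apply, ← hz, sliceLeft_rTensor, LinearMap.comp_assoc, hq,
      LinearMap.comp_id] at this
  refine ⟨t, hz ▸ ?_⟩
  exact (LinearMap.congr_fun (LinearMap.rTensor_comp_lTensor _ _ _) t).symm

theorem IsSubcoalgebra.sup {D E : Submodule k C} (hD : IsSubcoalgebra k C D)
    (hE : IsSubcoalgebra k C E) : IsSubcoalgebra k C (D ⊔ E) := by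
  have hle : D ⊔ E ≤ (LinearMap.range (TensorProduct.mapIncl (D ⊔ E) (D ⊔ E))).comap comul :=
    sup_le (fun x hx => TensorProduct.range_mapIncl_mono le_sup_left le_sup_left (hD x hx))
      fun x hx => TensorProduct.range_mapIncl_mono le_sup_right le_sup_right (hE x hx)
  exact fun x hx => hle hx

theorem IsComod.isSubcoalgebra_coeffSpace {σ : W →ₗ[k] W ⊗[k] C} (hσ : IsComod k C σ) :
    IsSubcoalgebra k C (coeffSpace k C σ) := by
  refine isSubcoalgebra_of_leftTranslate_mem (isSubcomod_iff_act.2 fun φ c hc => ?_)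
    fun φ c hc => ?_
  all_goals refine mem_coeffSpace_of_forall fun ψ hψ => ?_
  · rw [apply_act_comul]
    exact act_eq_zero_iff.1 (by rw [hσ.act_conv, hψ, zero_mul]) c hc
  · rw [apply_leftTranslate]
    exact act_eq_zero_iff.1 (by rw [hσ.act_conv, hψ, mul_zero]) c hc

end CoefficientSpace

section EndAlgebra

variable (k W : Type*) [Field k] [AddCommGroup W] [Module k W] [FiniteDimensional k W]
  [Nontrivial W]

theorem isSimpleRing_end : IsSimpleRing (Module.End k W) := by
  have : Nonempty (Fin (Module.finrank k W)) := ⟨⟨0, Module.finrank_pos⟩⟩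
  exact IsSimpleRing.of_ringEquiv (algEquivMatrix (Module.finBasis k W)).symm.toRingEquiv
    inferInstance

variable {k W}

theorem one_mem_of_mul_mem_end {I : Submodule k (Module.End k W)} (hl : ∀ x, ∀ y ∈ I, x * y ∈ I)
    (hr : ∀ x, ∀ y ∈ I, y * x ∈ I) (hI : I ≠ ⊥) : (1 : Module.End k W) ∈ I := by
  have := isSimpleRing_end k W
  let J : TwoSidedIdeal (Module.End k W) := TwoSidedIdeal.mk' I I.zero_mem I.add_mem I.neg_mem
    (fun {x y} h => hl x y h) (fun {x y} h => hr y x h)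
  obtain ⟨y, hy, hy0⟩ := I.ne_bot_iff.1 hI
  simpa [J] using IsSimpleRing.one_mem_of_ne_zero_mem J hy0 (by simpa [J] using hy)

theorem exists_mul_algHom_eq_mul (σ : Module.End k W →ₐ[k] Module.End k W) :
    ∃ u : (Module.End k W)ˣ, ∀ X, u * σ X = X * u := by
  have := isSimpleRing_end k W
  have hinj : Function.Injective σ := RingHom.injective (σ : Module.End k W →+* Module.End k W)
  have hbij : Function.Bijective σ :=
    ⟨hinj, (LinearMap.injective_iff_surjective (f := σ.toLinearMap)).1 hinj⟩
  obtain ⟨T, hT⟩ := (AlgEquiv.ofBijective σ hbij).eq_linearEquivConjAlgEquiv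
  refine ⟨LinearMap.GeneralLinearGroup.ofLinearEquiv T.symm, fun X => ?_⟩
  have hσ : σ X = T.conjAlgEquiv k X := by rw [← hT]; rfl
  ext w
  simp [hσ, LinearEquiv.conjAlgEquiv_apply]

end EndAlgebra

section SimpleComodule

variable {k C W : Type u} [Field k] [AddCommGroup C] [Module k C] [AddCommGroup W] [Module k W]
  {σ : W →ₗ[k] W ⊗[k] C}

theorem IsSimpleComod.nontrivial (hs : IsSimpleComod k C σ) : Nontrivial W := by
  by_contra h
  rw [not_nontrivial_iff_subsingleton] at h
  exact hs.2.1 (Subsingleton.elim _ _)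

theorem IsSimpleComod.eq_top (hs : IsSimpleComod k C σ) {U : Submodule k W}
    (hU : IsSubcomod k C σ U) (hbot : U ≠ ⊥) : U = ⊤ :=
  (hs.2.2 U le_top hU).resolve_left hbot

variable [Coalgebra k C] (hs : IsSimpleComod k C σ) (hσ : IsComod k C σ)
include hs hσ

theorem IsSimpleComod.finite : Module.Finite k W := by
  have := hs.nontrivial
  obtain ⟨w, hw⟩ := exists_ne (0 : W)
  have := finite_orbit σ w
  have htop := hs.eq_top (hσ.isSubcomod_orbit w)
    fun h => hw ((Submodule.mem_bot k).1 (h ▸ hσ.mem_orbit w))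
  exact Module.Finite.equiv ((LinearEquiv.ofEq _ _ htop).trans Submodule.topEquiv)

variable [IsAlgClosed k]

theorem IsSimpleComod.act_surjective : Function.Surjective (act σ) := by
  have := hs.finite hσ
  let E := hσ.actAlgHom.range
  have : IsSimpleModule E W := by
    rw [isSimpleModule_iff, isSimpleOrder_iff_isAtom_top, ← isSimpleModule_iff_isAtom]
    exact hσ.isSimpleSubcomod_restrictScalars_iff.1 hs
  intro X
  let f : Module.End (Module.End E W) W :=
    { X with
      map_smul' := fun g w => by
        obtain ⟨a, rfl⟩ :=
          (IsSimpleModule.algebraMap_end_bijective_of_isAlgClosed (A := E) (V := W) k).2 g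
        exact X.map_smul a w }
  have : Module.Finite (Module.End E W) W := .of_restrictScalars_finite k _ _
  obtain ⟨⟨_, ψ, rfl⟩, hψ⟩ := Module.Finite.toModuleEnd_moduleEnd_surjective f
  exact ⟨ψ.ofConv, LinearMap.ext fun w => LinearMap.congr_fun hψ w⟩

theorem IsSimpleComod.map_dualAnnihilator_eq_bot_or {D : Submodule k C}
    (hD : IsSubcoalgebra k C D) :
    D.dualAnnihilator.map (act σ) = ⊥ ∨ 1 ∈ D.dualAnnihilator.map (act σ) := by
  have := hs.nontrivial
  have := hs.finite hσ
  refine or_iff_not_imp_left.2 (one_mem_of_mul_mem_end ?_ ?_)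
  all_goals
    rintro X _ ⟨ψ, hψ, rfl⟩
    obtain ⟨θ, rfl⟩ := hs.act_surjective hσ X
    rw [SetLike.mem_coe, Submodule.mem_dualAnnihilator] at hψ
    rw [← hσ.act_conv]
    refine Submodule.mem_map_of_mem ((Submodule.mem_dualAnnihilator _).2 fun d hd => ?_)
  · rw [← apply_leftTranslate, hψ _ (hD.leftTranslate_mem θ hd)]
  · rw [← apply_act_comul, hψ _ (hD.isSubcomod.act_mem θ hd)]

theorem IsSimpleComod.isSimpleSubcoalgebra_coeffSpace :
    IsSimpleSubcoalgebra k C (coeffSpace k C σ) := by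
  refine ⟨hσ.isSubcoalgebra_coeffSpace, fun h => ?_, fun D hle hD => ?_⟩
  · have := hs.nontrivial
    refine one_ne_zero (α := Module.End k W) (hσ.act_counit.symm.trans (act_eq_zero_iff.2 ?_))
    simp [h]
  rcases hs.map_dualAnnihilator_eq_bot_or hσ hD with hbot | ⟨φ, hφ, hφone⟩
  · right
    refine le_antisymm hle fun c hc => ?_
    by_contra hcD
    obtain ⟨ψ, hψc, hψ⟩ := exists_dual_eq_one hcD
    have hact : act σ ψ = 0 := (Submodule.eq_bot_iff _).1 hbot _
      ⟨ψ, (Submodule.mem_dualAnnihilator ψ).2 hψ, rfl⟩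
    exact one_ne_zero (hψc.symm.trans (act_eq_zero_iff.1 hact c hc))
  · left
    refine hD.isSubcomod.eq_bot_of_counit_eq_zero fun d hd => ?_
    have hact : act σ (Coalgebra.counit - φ) = 0 := by
      rw [map_sub, hσ.act_counit, hφone, sub_self]
    have hd' : Coalgebra.counit d - φ d = 0 := act_eq_zero_iff.1 hact d (hle hd)
    rwa [(Submodule.mem_dualAnnihilator φ).1 hφ d hd, sub_zero] at hd'

theorem IsSimpleComod.exists_act_eq_smul_one {f : C →ₗ[k] k}
    (hf : ∀ ψ : C →ₗ[k] k, f ⋆ ψ = ψ ⋆ f) : ∃ c : k, act σ f = c • 1 := by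
  have := hs.nontrivial
  have := hs.finite hσ
  obtain ⟨c, hc⟩ := Module.End.exists_eigenvalue (act σ f)
  have hsub : IsSubcomod k C σ (Module.End.eigenspace (act σ f) c) :=
    isSubcomod_iff_act.2 fun ψ w hw => by
      rw [Module.End.mem_eigenspace_iff] at hw ⊢
      rw [← Module.End.mul_apply, ← hσ.act_conv, hf, hσ.act_conv, Module.End.mul_apply, hw,
        map_smul]
  refine ⟨c, LinearMap.ext fun w => Module.End.mem_eigenspace_iff.1 ?_⟩
  rw [hs.eq_top hsub hc]
  trivial

end SimpleComodule

section TwistedTrace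

variable {k A : Type u} [Field k] [Ring A] [HopfAlgebra k A]

-- In Sweedler notation: `t₂ ⊗ S(t₁)t₃ = t₃ ⊗ S(t₂)S²(t₁) = t₃ ⊗ S(S(t₁)t₂) = t ⊗ 1`.
theorem adR_eq_tmul_one {t : A} (ht : comul t =
      (antipode k ∘ₗ antipode k).lTensor A (TensorProduct.comm k A A (comul t))) :
    adR k A t = t ⊗ₜ[k] 1 := by
  let S : A →ₗ[k] A := antipode k
  let F : A →ₗ[k] A ⊗[k] A := ((inr k A A).toLinearMap ∘ₗ S) ⋆ (inl k A A).toLinearMap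
  let E : A →ₗ[k] A ⊗[k] A := (inr k A A).toLinearMap ⋆ (inl k A A).toLinearMap
  have hFE : LinearMap.mul' k _ ∘ₗ TensorProduct.map F (inr k A A).toLinearMap ∘ₗ
      (S ∘ₗ S).lTensor A ∘ₗ (TensorProduct.comm k A A).toLinearMap =
      S.lTensor A ∘ₗ LinearMap.mul' k _ ∘ₗ
        TensorProduct.map ((inr k A A).toLinearMap ∘ₗ S) E := by
    refine TensorProduct.ext' fun x y => ?_
    have hF : F y = ∑ i ∈ (ℛ k y).index, (ℛ k y).right i ⊗ₜ[k] S ((ℛ k y).left i) := by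
      simp [F, S, (ℛ k y).convMul_apply]
    have hE : E y = ∑ i ∈ (ℛ k y).index, (ℛ k y).right i ⊗ₜ[k] (ℛ k y).left i := by
      simp [E, (ℛ k y).convMul_apply]
    simp [hF, hE, S, Finset.sum_mul, Finset.mul_sum, antipode_mul_antidistrib]
  have hF : toConv (adR k A) = toConv F * toConv (inr k A A).toLinearMap := by
    rw [toConv_adR, ← mul_assoc]
  have hE : toConv ((inr k A A).toLinearMap ∘ₗ S) * toConv E = toConv (inl k A A).toLinearMap := by
    rw [show toConv E = toConv (inr k A A).toLinearMap * toConv (inl k A A).toLinearMap from rfl,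
      ← mul_assoc, toConv_comp_antipode_mul, one_mul]
  calc adR k A t = LinearMap.mul' k _ (TensorProduct.map F (inr k A A).toLinearMap (comul t)) :=
        LinearMap.congr_fun (congrArg ofConv hF) t
    _ = S.lTensor A (LinearMap.mul' k _
          (TensorProduct.map ((inr k A A).toLinearMap ∘ₗ S) E (comul t))) := by
        conv_lhs => rw [ht]
        exact LinearMap.congr_fun hFE (comul t)
    _ = S.lTensor A (t ⊗ₜ[k] 1) :=
        congrArg (S.lTensor A) (LinearMap.congr_fun (congrArg ofConv hE) t)
    _ = t ⊗ₜ[k] 1 := by rw [LinearMap.lTensor_tmul, antipode_one]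

variable (k A) in
/-- The square of the antipode, as an endomorphism of the underlying coalgebra. -/
noncomputable def antipodeSq : A →ₗc[k] A where
  toLinearMap := antipode k ∘ₗ antipode k
  counit_comp := by ext; simp
  map_comp_comul := by
    ext a
    simp only [LinearMap.comp_apply, comul_antipode]
    exact LinearMap.congr_fun (f := TensorProduct.map (antipode k ∘ₗ antipode k)
        (antipode k ∘ₗ antipode k))
      (g := TensorProduct.map (antipode k) (antipode k) ∘ₗ (TensorProduct.comm k A A).toLinearMap ∘ₗ
        TensorProduct.map (antipode k) (antipode k) ∘ₗ (TensorProduct.comm k A A).toLinearMap)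
      (by ext; simp) (comul a)

end TwistedTrace

section SimpleComodule

variable {k C W : Type u} [Field k] [AddCommGroup C] [Module k C] [AddCommGroup W] [Module k W]
  {σ : W →ₗ[k] W ⊗[k] C}

theorem exists_forall_apply_eq_trace [FiniteDimensional k W] (σ : W →ₗ[k] W ⊗[k] C)
    (u : Module.End k W) : ∃ t : C, ∀ ψ : C →ₗ[k] k, ψ t = LinearMap.trace k W (u * act σ ψ) := by
  let b := Module.finBasis k W
  refine ⟨∑ i, sliceLeft (b.coord i ∘ₗ u) (σ (b i)), fun ψ => ?_⟩
  rw [LinearMap.trace_eq_matrix_trace k b, map_sum]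
  refine Finset.sum_congr rfl fun i _ => ?_
  rw [Matrix.diag_apply, LinearMap.toMatrix_apply, Module.End.mul_apply, act_apply, apply_sliceLeft,
    ← apply_sliceRight]
  rfl

variable [Coalgebra k C] [IsAlgClosed k] (hs : IsSimpleComod k C σ) (hσ : IsComod k C σ)
include hs hσ

theorem IsSimpleComod.exists_mul_act_comp_eq_act_mul (T : C →ₗc[k] C)
    (hT : (coeffSpace k C σ).map (T : C →ₗ[k] C) ≤ coeffSpace k C σ) :
    ∃ u : (Module.End k W)ˣ, ∀ ψ : C →ₗ[k] k,
      u * act σ (ψ ∘ₗ (T : C →ₗ[k] C)) = act σ ψ * u := by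
  have := hs.nontrivial
  have := hs.finite hσ
  obtain ⟨r, hr⟩ := (act σ).exists_rightInverse_of_surjective
    (LinearMap.range_eq_top.2 (hs.act_surjective hσ))
  let F : Module.End k W →ₗ[k] Module.End k W :=
    act (cores k C (T : C →ₗ[k] C) σ) ∘ₗ r
  have hF (ψ : C →ₗ[k] k) : F (act σ ψ) = act (cores k C (T : C →ₗ[k] C) σ) ψ := by
    rw [← sub_eq_zero, LinearMap.comp_apply, ← map_sub, act_cores, act_eq_zero_iff]
    have hker : act σ (r (act σ ψ) - ψ) = 0 := by
      rw [map_sub, sub_eq_zero]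
      exact LinearMap.congr_fun hr (act σ ψ)
    exact fun c hc => act_eq_zero_iff.1 hker _ (hT (Submodule.mem_map_of_mem hc))
  obtain ⟨u, hu⟩ := exists_mul_algHom_eq_mul (AlgHom.ofLinearMap F
    (by rw [← hσ.act_counit, hF, (hσ.cores T).act_counit, hσ.act_counit])
    fun X Y => by
      obtain ⟨φ, rfl⟩ := hs.act_surjective hσ X
      obtain ⟨ψ, rfl⟩ := hs.act_surjective hσ Y
      rw [← hσ.act_conv, hF, hF, hF, (hσ.cores T).act_conv])
  refine ⟨u, fun ψ => ?_⟩
  rw [← act_cores, ← hF]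
  exact hu (act σ ψ)

-- The witness is `t` with `ψ(t) = tr(u · act σ ψ)`, where conjugation by `u` is the automorphism of
-- `End W` induced by `T`; the twist in the coproduct comes from cyclicity of the trace.
theorem IsSimpleComod.exists_twistedTrace (T : C →ₗc[k] C)
    (hT : (coeffSpace k C σ).map (T : C →ₗ[k] C) ≤ coeffSpace k C σ) :
    ∃ t ∈ coeffSpace k C σ, t ≠ 0 ∧
      comul t = (T : C →ₗ[k] C).lTensor C (TensorProduct.comm k C C (comul t)) := by
  have := hs.nontrivial
  have := hs.finite hσ
  obtain ⟨u, hu⟩ := hs.exists_mul_act_comp_eq_act_mul hσ T hT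
  obtain ⟨t, ht⟩ := exists_forall_apply_eq_trace σ (u : Module.End k W)
  refine ⟨t, mem_coeffSpace_of_forall fun ψ hψ => by rw [ht, hψ, mul_zero, map_zero], ?_, ?_⟩
  · rintro rfl
    obtain ⟨w, hw⟩ := exists_ne (0 : W)
    obtain ⟨d, hd⟩ := Module.Projective.exists_dual_eq_one k hw
    obtain ⟨ψ, hψ⟩ := hs.act_surjective hσ (↑u⁻¹ * d.smulRight w)
    have := ht ψ
    rw [map_zero, hψ, Units.mul_inv_cancel_left, LinearMap.trace_smulRight, hd] at this
    exact zero_ne_one this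
  · have htwist (φ ψ : C →ₗ[k] k) : (ψ ⋆ φ) t = ((φ ∘ₗ (T : C →ₗ[k] C)) ⋆ ψ) t := by
      rw [ht, ht, hσ.act_conv, hσ.act_conv, ← mul_assoc, ← mul_assoc, hu, LinearMap.trace_mul_comm,
        mul_assoc]
    refine eq_of_forall_sliceRight fun φ => eq_of_forall_dual (k := k) fun ψ => ?_
    rw [apply_sliceRight, apply_sliceRight]
    refine (htwist φ ψ).trans ?_
    exact LinearMap.congr_fun
      (f := LinearMap.mul' k k ∘ₗ TensorProduct.map (φ ∘ₗ (T : C →ₗ[k] C)) ψ)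
      (g := LinearMap.mul' k k ∘ₗ TensorProduct.map ψ φ ∘ₗ (T : C →ₗ[k] C).lTensor C ∘ₗ
        (TensorProduct.comm k C C).toLinearMap) (by ext; simp [mul_comm]) (comul t)

end SimpleComodule

section ClassFunctional

variable {k A B : Type u} [Field k] [Ring A] [HopfAlgebra k A] [Ring B] [HopfAlgebra k B]
  {π : A →ₐc[k] B} {σ : B →ₗ[k] B ⊗[k] A}

theorem exists_isProj_invariants_adR {h : A →ₗ[k] k} (hh : IsHaarFunctional h)
    (hs : Function.Surjective π) (hσ : IsComodHom k A (adR k A) σ (π : A →ₗ[k] B)) :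
    ∃ p : Module.End k B, LinearMap.IsProj (invariants (adR k B)) p ∧
      ∀ ψ, Commute (act (adR k B) ψ) p := by
  have hσA : IsComod k A σ := (isComod_adR k A).of_surjective hs hσ
  have hU := isSubcomod_invariants_cores hσ hσA
  rw [cores_eq_adR_of_isComodHom hs hσ] at hU
  obtain ⟨p, hp, hcomm⟩ := hh.exists_isProj_commute_act hσA hU
  refine ⟨p, hp, fun ψ => ?_⟩
  rw [← cores_eq_adR_of_isComodHom hs hσ, act_cores]
  exact hcomm _

theorem conv_comm_of_isProj_invariants_adR {p : Module.End k B}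
    (hp : LinearMap.IsProj (invariants (adR k B)) p) (hcomm : ∀ ψ, Commute (act (adR k B) ψ) p)
    (φ ψ : B →ₗ[k] k) : (φ ∘ₗ p) ⋆ ψ = ψ ⋆ (φ ∘ₗ p) := by
  have hinv : (φ ∘ₗ p).rTensor B ∘ₗ adR k B = (inl k k B).toLinearMap ∘ₗ φ ∘ₗ p := by
    refine LinearMap.ext fun b => eq_of_forall_sliceRight fun θ => ?_
    have hb : act (adR k B) θ (p b) = θ 1 • p b :=
      isInvariant_iff_act.1 (mem_invariants.1 (hp.map_mem b)) θ
    have hθ := LinearMap.congr_fun (hcomm θ).eq b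
    rw [Module.End.mul_apply, Module.End.mul_apply, hb, act_apply] at hθ
    rw [LinearMap.comp_apply, sliceRight_rTensor, LinearMap.comp_apply, ← hθ]
    simp
  have key := congrArg (toConv (inr k k B).toLinearMap * ·)
    ((congrArg toConv hinv).symm.trans (toConv_rTensor_comp_adR (φ ∘ₗ p)))
  rw [← mul_assoc _ (toConv ((inr k k B).toLinearMap ∘ₗ antipode k)), toConv_mul_comp_antipode,
    one_mul] at key
  have hψ := congrArg (fun f => sliceRight ψ ∘ₗ ofConv f) key
  ext b
  refine Eq.trans ?_ ((LinearMap.congr_fun hψ b).symm.trans ?_)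
  · exact LinearMap.congr_fun (f := LinearMap.mul' k k ∘ₗ TensorProduct.map (φ ∘ₗ p) ψ)
      (g := sliceRight ψ ∘ₗ LinearMap.mul' k (k ⊗[k] B) ∘ₗ TensorProduct.map
        ((inl k k B).toLinearMap ∘ₗ φ ∘ₗ p) (inr k k B).toLinearMap)
      (by ext; simp [mul_comm]) (comul b)
  · exact LinearMap.congr_fun (g := LinearMap.mul' k k ∘ₗ TensorProduct.map ψ (φ ∘ₗ p))
      (f := sliceRight ψ ∘ₗ LinearMap.mul' k (k ⊗[k] B) ∘ₗ TensorProduct.map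
        (inr k k B).toLinearMap ((inl k k B).toLinearMap ∘ₗ φ ∘ₗ p))
      (by ext; simp) (comul b)

end ClassFunctional

section SimpleSubcoalgebra

variable {k B W : Type u} [Field k] [Ring B] [Bialgebra k B] [AddCommGroup W] [Module k W]
  {σ : W →ₗ[k] W ⊗[k] B}

theorem IsSubcoalgebra.one_notMem_sup {D E : Submodule k B} (hD : IsSubcoalgebra k B D)
    (hE : IsSubcoalgebra k B E) (hD1 : (1 : B) ∉ D) (hE1 : (1 : B) ∉ E) : (1 : B) ∉ D ⊔ E := by
  obtain ⟨φ, hφ1, hφ⟩ := exists_dual_eq_one hD1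
  obtain ⟨ψ, hψ1, hψ⟩ := exists_dual_eq_one hE1
  have hle : D ⊔ E ≤ LinearMap.ker (φ ⋆ ψ : B →ₗ[k] k) := by
    refine sup_le (fun d hd => ?_) fun e he => ?_
    · rw [LinearMap.mem_ker, ← apply_act_comul]
      exact hφ _ (hD.isSubcomod.act_mem ψ hd)
    · rw [LinearMap.mem_ker, ← apply_leftTranslate]
      exact hψ _ (hE.leftTranslate_mem φ he)
  intro h
  have : (φ ⋆ ψ : B →ₗ[k] k) 1 = 0 := hle h
  rw [← apply_act_comul, act_comul_one, map_smul, hφ1, hψ1] at this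
  simp at this

variable (k B) in
theorem exists_dual_one_eq_one_forall_eq_zero :
    ∃ φ : B →ₗ[k] k, φ 1 = 1 ∧
      ∀ D, IsSimpleSubcoalgebra k B D → (1 : B) ∉ D → ∀ d ∈ D, φ d = 0 := by
  have := nontrivial_of_bialgebra k B
  let ι := {D : Submodule k B // IsSimpleSubcoalgebra k B D ∧ (1 : B) ∉ D}
  have h1 : (1 : B) ∉ ⨆ D : ι, (D : Submodule k B) := by
    rw [Submodule.mem_iSup_iff_exists_finset]
    rintro ⟨s, hs⟩
    rw [← Finset.sup_eq_iSup] at hs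
    refine (Finset.sup_induction (p := fun D => IsSubcoalgebra k B D ∧ (1 : B) ∉ D) ?_ ?_ ?_ :
      IsSubcoalgebra k B (s.sup _) ∧ _).2 hs
    · exact ⟨by rintro _ rfl; simp, by simp⟩
    · exact fun D hD E hE => ⟨hD.1.sup hE.1, hD.1.one_notMem_sup hE.1 hD.2 hE.2⟩
    · exact fun D _ => ⟨D.2.1.1, D.2.2⟩
  obtain ⟨φ, hφ1, hφ⟩ := exists_dual_eq_one h1
  exact ⟨φ, hφ1, fun D hD hD1 d hd => hφ d (Submodule.mem_iSup_of_mem (⟨D, hD, hD1⟩ : ι) hd)⟩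

theorem IsSimpleComod.act_eq_smul_one_of_one_mem [IsAlgClosed k] (hs : IsSimpleComod k B σ)
    (hσ : IsComod k B σ) (h1 : (1 : B) ∈ coeffSpace k B σ) (ψ : B →ₗ[k] k) :
    act σ ψ = ψ 1 • 1 := by
  have := nontrivial_of_bialgebra k B
  have hsub : IsSubcoalgebra k B (k ∙ (1 : B)) := by
    intro x hx
    obtain ⟨c, rfl⟩ := Submodule.mem_span_singleton.1 hx
    have h1 := Submodule.mem_span_singleton_self (R := k) (1 : B)
    refine ⟨c • (⟨1, h1⟩ ⊗ₜ ⟨1, h1⟩), ?_⟩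
    simp [Algebra.TensorProduct.one_def]
  have hspan := ((hs.isSimpleSubcoalgebra_coeffSpace hσ).2.2 _
    ((Submodule.span_singleton_le_iff_mem _ _).2 h1) hsub).resolve_left (by simp)
  rw [← sub_eq_zero, ← hσ.act_counit, ← map_smul, ← map_sub, act_eq_zero_iff, ← hspan]
  intro x hx
  obtain ⟨c, rfl⟩ := Submodule.mem_span_singleton.1 hx
  simp

end SimpleSubcoalgebra

section AdjointInvariant

variable {k B W : Type u} [Field k] [IsAlgClosed k] [Ring B] [HopfAlgebra k B] [AddCommGroup W]
  [Module k W] {σ : W →ₗ[k] W ⊗[k] B}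

theorem IsSimpleComod.exists_mem_invariants_adR (hs : IsSimpleComod k B σ) (hσ : IsComod k B σ)
    (hS2 : (coeffSpace k B σ).map (antipode k ∘ₗ antipode k) ≤ coeffSpace k B σ) :
    ∃ t ∈ coeffSpace k B σ, t ≠ 0 ∧ t ∈ invariants (adR k B) := by
  obtain ⟨t, ht, ht0, hcomul⟩ := hs.exists_twistedTrace hσ (antipodeSq k B) hS2
  exact ⟨t, ht, ht0, mem_invariants.2 (adR_eq_tmul_one hcomul)⟩

-- By Schur's lemma `φ ∘ p` acts by a scalar `c`, and evaluating at the invariant coefficient `t`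
-- gives `φ(t) = c ε(t)`. As `φ` varies this forces `ε(t) ≠ 0`, so `c` is determined by `φ(t)`.
theorem IsSimpleComod.act_comp_isProj_eq_zero (hs : IsSimpleComod k B σ) (hσ : IsComod k B σ)
    (hS2 : (coeffSpace k B σ).map (antipode k ∘ₗ antipode k) ≤ coeffSpace k B σ)
    {p : Module.End k B} (hp : LinearMap.IsProj (invariants (adR k B)) p)
    (hcomm : ∀ ψ, Commute (act (adR k B) ψ) p) {φ : B →ₗ[k] k}
    (hφ : ∀ c ∈ coeffSpace k B σ, φ c = 0) : act σ (φ ∘ₗ p) = 0 := by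
  obtain ⟨t, ht, ht0, htinv⟩ := hs.exists_mem_invariants_adR hσ hS2
  have hscalar (θ : B →ₗ[k] k) : ∃ c : k, act σ (θ ∘ₗ p) = c • 1 ∧ θ t = c * counit t := by
    obtain ⟨c, hc⟩ := hs.exists_act_eq_smul_one hσ (conv_comm_of_isProj_invariants_adR hp hcomm θ)
    refine ⟨c, hc, ?_⟩
    rw [← hσ.act_counit, ← sub_eq_zero, ← map_smul, ← map_sub, act_eq_zero_iff] at hc
    have := hc t ht
    rwa [LinearMap.sub_apply, LinearMap.comp_apply, hp.map_id t htinv, sub_eq_zero] at this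
  have hcounit : Coalgebra.counit (R := k) t ≠ 0 := by
    intro h
    refine ht0 (eq_of_forall_dual (k := k) fun θ => ?_)
    obtain ⟨c, -, hc⟩ := hscalar θ
    rw [hc, h, mul_zero, map_zero]
  obtain ⟨c, hact, hc⟩ := hscalar φ
  rw [hφ t ht, eq_comm, mul_eq_zero, or_iff_left hcounit] at hc
  rw [hact, hc, zero_smul]

end AdjointInvariant

section Fitting

variable {k C W : Type u} [Field k] [AddCommGroup C] [Module k C] [AddCommGroup W] [Module k W]
  [FiniteDimensional k W] {σ : W →ₗ[k] W ⊗[k] C}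

theorem IsSubcomod.exists_isSimpleSubcomod_le {N : Submodule k W} (hN : IsSubcomod k C σ N)
    (h0 : N ≠ ⊥) : ∃ U ≤ N, IsSimpleSubcomod k C σ U := by
  obtain ⟨U, ⟨hU, hU0, hle⟩, hmin⟩ := wellFounded_lt.has_min
    {U : Submodule k W | IsSubcomod k C σ U ∧ U ≠ ⊥ ∧ U ≤ N} ⟨N, hN, h0, le_rfl⟩
  refine ⟨U, hle, hU, hU0, fun U' hU' h => or_iff_not_imp_left.2 fun h0' => ?_⟩
  exact hU'.eq_of_not_lt (hmin U' ⟨h, h0', hU'.trans hle⟩)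

theorem isNilpotent_of_forall_isSimpleSubcomod_le_ker {X : Module.End k W}
    (hX : ∀ ψ, Commute (act σ ψ) X)
    (hker : ∀ U, IsSimpleSubcomod k C σ U → U ≤ LinearMap.ker X) : IsNilpotent X := by
  obtain ⟨n, hn⟩ := Filter.eventually_atTop.1 X.eventually_isCompl_ker_pow_range_pow
  have hrange : IsSubcomod k C σ (LinearMap.range (X ^ (n + 1))) := by
    refine isSubcomod_iff_act.2 ?_
    rintro ψ _ ⟨w, rfl⟩
    exact ⟨act σ ψ w, (LinearMap.congr_fun ((hX ψ).pow_right (n + 1)).eq w).symm⟩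
  refine ⟨n + 1, LinearMap.range_eq_bot.1 (by_contra fun h0 => ?_)⟩
  obtain ⟨U, hU, hsimple⟩ := hrange.exists_isSimpleSubcomod_le h0
  have hpow : LinearMap.ker X ≤ LinearMap.ker (X ^ (n + 1)) := by
    rw [pow_succ]
    exact LinearMap.ker_le_ker_comp _ _
  exact hsimple.2.1 (le_bot_iff.1
    ((hn (n + 1) n.le_succ).disjoint ((hker U hsimple).trans hpow) hU))

end Fitting

section ComodHom

variable {k A B V W : Type u} [Field k] [AddCommGroup A] [Module k A] [AddCommGroup V] [Module k V]
  [AddCommGroup W] [Module k W] {g : V →ₗ[k] W}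

theorem IsComodHom.cores [AddCommGroup B] [Module k B] {ρ : V →ₗ[k] V ⊗[k] A}
    {σ : W →ₗ[k] W ⊗[k] A} (hg : IsComodHom k A ρ σ g) (π : A →ₗ[k] B) :
    IsComodHom k B (cores k A π ρ) (cores k A π σ) g := by
  refine LinearMap.ext fun v => (congrArg (π.lTensor W) (LinearMap.congr_fun hg v)).trans ?_
  exact LinearMap.congr_fun ((LinearMap.lTensor_comp_rTensor _ g π).trans
    (LinearMap.rTensor_comp_lTensor _ g π).symm) (ρ v)

theorem IsComodHom.invariants_sup_maxGenEigenspace_le_comap [Ring B] [Bialgebra k B]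
    {τ : V →ₗ[k] V ⊗[k] B} {τ' : W →ₗ[k] W ⊗[k] B} (hg : IsComodHom k B τ τ' g) (f : B →ₗ[k] k) :
    invariants τ ⊔ Module.End.maxGenEigenspace (act τ f) 0 ≤
      (invariants τ' ⊔ Module.End.maxGenEigenspace (act τ' f) 0).comap g := by
  refine sup_le (fun v hv => Submodule.mem_sup_left ?_) fun v hv => Submodule.mem_sup_right ?_
  · rw [mem_invariants, isInvariant_iff_act] at hv ⊢
    intro ψ
    rw [hg.map_act, hv, map_smul]
  · rw [Module.End.mem_maxGenEigenspace] at hv ⊢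
    obtain ⟨n, hn⟩ := hv
    have hpow := Module.End.commute_pow_left_of_commute
      (LinearMap.ext fun v => hg.map_act f v : act τ' f ∘ₗ g = g ∘ₗ act τ f) n
    rw [zero_smul, sub_zero] at hn ⊢
    exact ⟨n, (LinearMap.congr_fun hpow v).trans (by rw [LinearMap.comp_apply, hn, map_zero])⟩

end ComodHom

section HaarOnCoradical

variable {k A B V : Type u} [Field k] [Ring A] [HopfAlgebra k A] [Ring B] [HopfAlgebra k B]
  [AddCommGroup V] [Module k V] {π : A →ₐc[k] B} {f : B →ₗ[k] k}

/-- A class function on `B` that agrees with a Haar functional on the coradical: it takes the value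
`1` at `1` and vanishes on the coefficients of every simple comodule in which `1` does not occur. -/
structure IsHaarOnCoradical (f : B →ₗ[k] k) : Prop where
  map_one : f 1 = 1
  conv_comm : ∀ ψ : B →ₗ[k] k, f ⋆ ψ = ψ ⋆ f
  act_eq_zero : ∀ X : SimpleComodule k B, (1 : B) ∉ coeffSpace k B X.ρ → act X.ρ f = 0

theorem IsHaarOnCoradical.commute_act (hf : IsHaarOnCoradical f) {τ : V →ₗ[k] V ⊗[k] B}
    (hτ : IsComod k B τ) (ψ : B →ₗ[k] k) : Commute (act τ ψ) (act τ f) := by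
  rw [Commute, SemiconjBy, ← hτ.act_conv, ← hτ.act_conv, hf.conv_comm]

theorem IsHaarOnCoradical.le_invariants_or_le_ker [IsAlgClosed k] (hf : IsHaarOnCoradical f)
    {τ : V →ₗ[k] V ⊗[k] B} (hτ : IsComod k B τ) {U : Submodule k V}
    (hU : IsSimpleSubcomod k B τ U) : U ≤ invariants τ ∨ U ≤ LinearMap.ker (act τ f) := by
  obtain ⟨ρ, hom, hs⟩ := hU.exists_coact
  have hρ := hτ.of_injective U.injective_subtype hom
  have hact (ψ : B →ₗ[k] k) (u : U) : act τ ψ u = act ρ ψ u := hom.map_act ψ u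
  by_cases h1 : (1 : B) ∈ coeffSpace k B ρ
  · refine Or.inl fun u hu => mem_invariants.2 (isInvariant_iff_act.2 fun ψ => ?_)
    rw [hact ψ ⟨u, hu⟩, hs.act_eq_smul_one_of_one_mem hρ h1]
    simp
  · refine Or.inr fun u hu => ?_
    rw [LinearMap.mem_ker, hact f ⟨u, hu⟩, hf.act_eq_zero ⟨U, ρ, hρ, hs⟩ h1]
    simp

-- Normality makes the `B`-invariants an `A`-subcomodule, so a simple `A`-comodule restricted to `B`
-- is either trivial or has no invariants at all; in the second case `f` kills its socle.
theorem IsHaarOnCoradical.invariants_eq_top_or_isNilpotent [IsAlgClosed k]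
    (hf : IsHaarOnCoradical f) (hπ : IsRightNormal k A (π : A →ₗ[k] B)) {ρ : V →ₗ[k] V ⊗[k] A}
    (hs : IsSimpleComod k A ρ) (hρ : IsComod k A ρ) :
    invariants (cores k A (π : A →ₗ[k] B) ρ) = ⊤ ∨
      IsNilpotent (act (cores k A (π : A →ₗ[k] B) ρ) f) := by
  have := hs.finite hρ
  have hτ := hρ.cores (π : A →ₗc[k] B)
  obtain ⟨σ, hσ⟩ := hπ
  refine (hs.2.2 _ le_top (isSubcomod_invariants_cores hσ hρ)).symm.imp_right fun hbot => ?_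
  refine isNilpotent_of_forall_isSimpleSubcomod_le_ker (hf.commute_act hτ) fun U hU => ?_
  exact (hf.le_invariants_or_le_ker hτ hU).resolve_left
    fun hle => hU.2.1 (le_bot_iff.1 (hle.trans hbot.le))

theorem IsHaarOnCoradical.le_invariants_sup_maxGenEigenspace [IsAlgClosed k]
    (hf : IsHaarOnCoradical f) (hπ : IsRightNormal k A (π : A →ₗ[k] B)) {ρ : V →ₗ[k] V ⊗[k] A}
    (hρ : IsComod k A ρ) {U : Submodule k V} (hU : IsSimpleSubcomod k A ρ U) :
    U ≤ invariants (cores k A (π : A →ₗ[k] B) ρ) ⊔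
      Module.End.maxGenEigenspace (act (cores k A (π : A →ₗ[k] B) ρ) f) 0 := by
  obtain ⟨σ, hom, hs⟩ := hU.exists_coact
  have htop : invariants (cores k A (π : A →ₗ[k] B) σ) ⊔
      Module.End.maxGenEigenspace (act (cores k A (π : A →ₗ[k] B) σ) f) 0 = ⊤ := by
    obtain hinv | ⟨n, hn⟩ := hf.invariants_eq_top_or_isNilpotent hπ hs
      (hρ.of_injective U.injective_subtype hom)
    · rw [hinv, top_sup_eq]
    · refine eq_top_iff.2 fun u _ => Submodule.mem_sup_right ?_
      exact (Module.End.mem_maxGenEigenspace _ _ _).2 ⟨n, by simp [hn]⟩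
  exact fun u hu => (hom.cores (π : A →ₗ[k] B)).invariants_sup_maxGenEigenspace_le_comap f
    (htop ▸ Submodule.mem_top : (⟨u, hu⟩ : U) ∈ _)

theorem IsHaarOnCoradical.exists_isHaarFunctional (hf : IsHaarOnCoradical f)
    (h : invariants comul ⊔ Module.End.maxGenEigenspace (act comul f) 0 = ⊤) :
    ∃ h : B →ₗ[k] k, IsHaarFunctional h := by
  have h1 : (1 : B) ∉ Module.End.maxGenEigenspace (act comul f) 0 := by
    rw [Module.End.mem_maxGenEigenspace]
    rintro ⟨n, hn⟩
    rw [zero_smul, sub_zero, Module.End.pow_apply, Function.iterate_fixed (by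
      rw [act_comul_one, hf.map_one, one_smul])] at hn
    exact one_ne_zero (hf.map_one.symm.trans (by rw [hn, map_zero]))
  obtain ⟨χ, hχ1, hχ⟩ := exists_dual_eq_one h1
  refine ⟨χ, hχ1, fun ψ => ?_⟩
  have hle : invariants comul ⊔ Module.End.maxGenEigenspace (act comul f) 0 ≤
      LinearMap.eqLocus (χ ⋆ ψ : B →ₗ[k] k) (ψ 1 • χ) := by
    refine sup_le (fun b hb => ?_) fun b hb => ?_ <;> rw [LinearMap.mem_eqLocus, ← apply_act_comul]
    · rw [isInvariant_iff_act.1 (mem_invariants.1 hb), map_smul, LinearMap.smul_apply]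
    · rw [LinearMap.smul_apply, hχ b hb, smul_zero]
      exact hχ _ (Module.End.mapsTo_maxGenEigenspace_of_comm
        (hf.commute_act (isComod_comul k B) ψ).symm 0 hb)
  exact LinearMap.ext fun b => hle (h ▸ Submodule.mem_top)

theorem IsHaarFunctional.exists_isHaarOnCoradical [IsAlgClosed k] {g : A →ₗ[k] k}
    (hg : IsHaarFunctional g) (hs : Function.Surjective π)
    (hπ : IsRightNormal k A (π : A →ₗ[k] B))
    (hS2 : ∀ D : Submodule k B, IsSimpleSubcoalgebra k B D →
      D.map (antipode k ∘ₗ antipode k) ≤ D) : ∃ f : B →ₗ[k] k, IsHaarOnCoradical f := by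
  obtain ⟨σ, hσ⟩ := hπ
  obtain ⟨p, hp, hcomm⟩ := exists_isProj_invariants_adR hg hs hσ
  obtain ⟨φ, hφ1, hφ⟩ := exists_dual_one_eq_one_forall_eq_zero k B
  refine ⟨φ ∘ₗ p, ?_, conv_comm_of_isProj_invariants_adR hp hcomm φ, fun X h1 => ?_⟩
  · rw [LinearMap.comp_apply, hp.map_id 1 (mem_invariants.2 adR_one), hφ1]
  · have hD := X.isSimple.isSimpleSubcoalgebra_coeffSpace X.isComod
    exact X.isSimple.act_comp_isProj_eq_zero X.isComod (hS2 _ hD) hp hcomm (hφ _ hD h1)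

theorem IsHaarFunctional.exists_of_isRightNormal [IsAlgClosed k] {g : A →ₗ[k] k}
    (hg : IsHaarFunctional g) (hs : Function.Surjective π)
    (hπ : IsRightNormal k A (π : A →ₗ[k] B))
    (hS2 : ∀ D : Submodule k B, IsSimpleSubcoalgebra k B D →
      D.map (antipode k ∘ₗ antipode k) ≤ D) : ∃ h : B →ₗ[k] k, IsHaarFunctional h := by
  obtain ⟨f, hf⟩ := hg.exists_isHaarOnCoradical hs hπ hS2
  have hcomul : IsComodHom k B (cores k A (π : A →ₗ[k] B) comul) comul (π : A →ₗ[k] B) := by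
    refine LinearMap.ext fun a => (CoalgHomClass.map_comp_comul_apply π a).symm.trans ?_
    exact LinearMap.congr_fun (LinearMap.rTensor_comp_lTensor _ _ _).symm (comul a)
  obtain ⟨ι, U, hU, -, htop⟩ := hg.isCosemisimple A comul (isComod_comul k A)
  refine hf.exists_isHaarFunctional (eq_top_iff.2 ?_)
  rw [← LinearMap.range_eq_top.2 hs, LinearMap.range_eq_map, Submodule.map_le_iff_le_comap, ← htop]
  exact iSup_le fun i => (hf.le_invariants_sup_maxGenEigenspace hπ (isComod_comul k A)
    (hU i)).trans (hcomul.invariants_sup_maxGenEigenspace_le_comap f)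

end HaarOnCoradical

/-- The Hopf algebra `A^{op,cop}`: the multiplication and the comultiplication of `A` are both
reversed. Passing to it exchanges left and right adjoint coactions. -/
def OpCop (A : Type u) : Type u := Aᵐᵒᵖ

namespace OpCop

noncomputable instance {A : Type u} [Ring A] : Ring (OpCop A) := inferInstanceAs (Ring Aᵐᵒᵖ)

noncomputable instance {k A : Type u} [Field k] [Ring A] [Algebra k A] : Algebra k (OpCop A) :=
  inferInstanceAs (Algebra k Aᵐᵒᵖ)

/-- The canonical linear equivalence from `A` to `OpCop A`. -/
noncomputable def op (k A : Type u) [Field k] [Ring A] [Algebra k A] : A ≃ₗ[k] OpCop A :=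
  MulOpposite.opLinearEquiv k

section Algebra

variable {k A B : Type u} [Field k] [Ring A] [Algebra k A] [Ring B] [Algebra k B]

theorem op_one : op k A 1 = 1 :=
  rfl

theorem op_mul (a b : A) : op k A (a * b) = op k A b * op k A a :=
  rfl

variable (k A B) in
/-- The canonical linear equivalence from `A ⊗ B` to `OpCop B ⊗ OpCop A`, reversing the factors. -/
noncomputable def opTensor : A ⊗[k] B ≃ₗ[k] OpCop B ⊗[k] OpCop A :=
  TensorProduct.comm k A B ≪≫ₗ TensorProduct.congr (op k B) (op k A)

@[simp]
theorem opTensor_tmul (a : A) (b : B) : opTensor k A B (a ⊗ₜ b) = op k B b ⊗ₜ op k A a := by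
  simp [opTensor]

theorem opTensor_mul (x y : A ⊗[k] A) :
    opTensor k A A (x * y) = opTensor k A A y * opTensor k A A x :=
  LinearMap.congr_fun₂ (f := (LinearMap.mul k (A ⊗[k] A)).compr₂ (opTensor k A A).toLinearMap)
    (g := (LinearMap.mul k (OpCop A ⊗[k] OpCop A)).flip.compl₁₂ (opTensor k A A).toLinearMap
      (opTensor k A A).toLinearMap) (by ext; simp [op_mul]) x y

variable (k A) in
/-- The canonical linear map from `A ⊗ (A ⊗ A)` to its analogue for `OpCop A`, reversing the
factors. -/
noncomputable def opTensor₃ :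
    A ⊗[k] (A ⊗[k] A) →ₗ[k] OpCop A ⊗[k] (OpCop A ⊗[k] OpCop A) :=
  (TensorProduct.assoc k _ _ _).toLinearMap ∘ₗ
    TensorProduct.map (opTensor k A A).toLinearMap (op k A).toLinearMap ∘ₗ
      (TensorProduct.comm k A (A ⊗[k] A)).toLinearMap

end Algebra

section Coalgebra

variable {k A : Type u} [Field k] [Ring A] [Bialgebra k A]

noncomputable instance : CoalgebraStruct k (OpCop A) where
  comul := (opTensor k A A).toLinearMap ∘ₗ comul ∘ₗ (op k A).symm.toLinearMap
  counit := counit ∘ₗ (op k A).symm.toLinearMap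

theorem comul_op (a : A) : comul (R := k) (op k A a) = opTensor k A A (comul a) :=
  rfl

theorem counit_op (a : A) : counit (R := k) (op k A a) = counit (R := k) a :=
  rfl

theorem lTensor_comul_opTensor (z : A ⊗[k] A) :
    comul.lTensor (OpCop A) (opTensor k A A z) =
      opTensor₃ k A (TensorProduct.assoc k A A A (comul.rTensor A z)) := by
  refine LinearMap.congr_fun (f := comul.lTensor _ ∘ₗ (opTensor k A A).toLinearMap)
    (g := opTensor₃ k A ∘ₗ (TensorProduct.assoc k A A A).toLinearMap ∘ₗ comul.rTensor A)
    (TensorProduct.ext' fun a b => ?_) z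
  simpa [comul_op] using LinearMap.congr_fun
    (f := TensorProduct.mk k _ _ (op k A b) ∘ₗ (opTensor k A A).toLinearMap)
    (g := opTensor₃ k A ∘ₗ (TensorProduct.assoc k A A A).toLinearMap ∘ₗ
      (TensorProduct.mk k (A ⊗[k] A) A).flip b) (by ext; simp [opTensor₃]) (comul a)

noncomputable instance : Coalgebra k (OpCop A) where
  coassoc := LinearMap.ext fun x => by
    obtain ⟨a, rfl⟩ := (op k A).surjective x
    simp only [LinearMap.comp_apply, comul_op, lTensor_comul_opTensor, coassoc_apply]
    exact LinearMap.congr_fun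
      (f := (TensorProduct.assoc k _ _ _).toLinearMap ∘ₗ comul.rTensor _ ∘ₗ
        (opTensor k A A).toLinearMap)
      (g := opTensor₃ k A ∘ₗ comul.lTensor A)
      (TensorProduct.ext' fun a b => by simp [opTensor₃, comul_op]) (comul a)
  rTensor_counit_comp_comul := LinearMap.ext fun x => by
    obtain ⟨a, rfl⟩ := (op k A).surjective x
    refine (LinearMap.congr_fun
      (f := counit.rTensor (OpCop A) ∘ₗ (opTensor k A A).toLinearMap)
      (g := (op k A).toLinearMap.lTensor k ∘ₗ (TensorProduct.comm k A k).toLinearMap ∘ₗ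
        counit.lTensor A) (TensorProduct.ext' fun a b => by simp [counit_op]) (comul a)).trans ?_
    simp
  lTensor_counit_comp_comul := LinearMap.ext fun x => by
    obtain ⟨a, rfl⟩ := (op k A).surjective x
    refine (LinearMap.congr_fun
      (f := counit.lTensor (OpCop A) ∘ₗ (opTensor k A A).toLinearMap)
      (g := (op k A).toLinearMap.rTensor k ∘ₗ (TensorProduct.comm k k A).toLinearMap ∘ₗ
        counit.rTensor A) (TensorProduct.ext' fun a b => by simp [counit_op]) (comul a)).trans ?_
    simp

noncomputable instance : Bialgebra k (OpCop A) :=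
  Bialgebra.mk' k (OpCop A) (by rw [← op_one (k := k), counit_op, Bialgebra.counit_one])
    (fun {x y} => by
      obtain ⟨a, rfl⟩ := (op k A).surjective x
      obtain ⟨b, rfl⟩ := (op k A).surjective y
      rw [← op_mul, counit_op, counit_op, counit_op, Bialgebra.counit_mul, mul_comm])
    (by
      rw [← op_one (k := k), comul_op, Bialgebra.comul_one, Algebra.TensorProduct.one_def,
        opTensor_tmul, op_one, Algebra.TensorProduct.one_def])
    (fun {x y} => by
      obtain ⟨a, rfl⟩ := (op k A).surjective x
      obtain ⟨b, rfl⟩ := (op k A).surjective y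
      rw [← op_mul, comul_op, comul_op, comul_op, Bialgebra.comul_mul, opTensor_mul])

theorem conv_comp_op (φ ψ : OpCop A →ₗ[k] k) :
    (φ ⋆ ψ : OpCop A →ₗ[k] k) ∘ₗ (op k A).toLinearMap =
      (ψ ∘ₗ (op k A).toLinearMap) ⋆ (φ ∘ₗ (op k A).toLinearMap) :=
  LinearMap.ext fun a => LinearMap.congr_fun
    (f := LinearMap.mul' k k ∘ₗ TensorProduct.map φ ψ ∘ₗ (opTensor k A A).toLinearMap)
    (g := LinearMap.mul' k k ∘ₗ TensorProduct.map (ψ ∘ₗ (op k A).toLinearMap)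
      (φ ∘ₗ (op k A).toLinearMap)) (by ext; simp [mul_comm]) (comul a)

theorem range_map_subtype_op (D : Submodule k A) :
    LinearMap.range (TensorProduct.map (D.map (op k A).toLinearMap).subtype
      (D.map (op k A).toLinearMap).subtype) =
      (LinearMap.range (TensorProduct.map D.subtype D.subtype)).map
        (opTensor k A A).toLinearMap := by
  let e := (op k A).submoduleMap D
  rw [← LinearMap.range_comp, ← LinearMap.range_comp_of_range_eq_top _
    (LinearEquiv.range (TensorProduct.comm k D D ≪≫ₗ TensorProduct.congr e e))]
  congr 1
  ext
  simp [e]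

theorem isSubcoalgebra_map_op_iff {D : Submodule k A} :
    IsSubcoalgebra k (OpCop A) (D.map (op k A).toLinearMap) ↔ IsSubcoalgebra k A D := by
  simp only [IsSubcoalgebra, range_map_subtype_op, Submodule.mem_map, forall_exists_index, and_imp,
    forall_apply_eq_imp_iff₂, LinearEquiv.coe_coe, comul_op, (opTensor k A A).injective.eq_iff,
    exists_eq_right]

theorem isSimpleSubcoalgebra_of_map_op {D : Submodule k A}
    (hD : IsSimpleSubcoalgebra k (OpCop A) (D.map (op k A).toLinearMap)) :
    IsSimpleSubcoalgebra k A D := by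
  have hinj := Submodule.map_injective_of_injective (op k A).injective
  refine ⟨isSubcoalgebra_map_op_iff.1 hD.1, ?_, fun D' hle hD' => ?_⟩
  · rintro rfl
    exact hD.2.1 (Submodule.map_bot _)
  · exact (hD.2.2 _ (Submodule.map_mono hle) (isSubcoalgebra_map_op_iff.2 hD')).imp
      (fun h => hinj (h.trans (Submodule.map_bot _).symm)) fun h => hinj h

end Coalgebra

section HopfAlgebra

variable {k A B : Type u} [Field k] [Ring A] [HopfAlgebra k A] [Ring B] [HopfAlgebra k B]

noncomputable instance : HopfAlgebra k (OpCop A) where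
  antipode := (op k A).toLinearMap ∘ₗ antipode k ∘ₗ (op k A).symm.toLinearMap
  mul_antipode_rTensor_comul := LinearMap.ext fun x => by
    obtain ⟨a, rfl⟩ := (op k A).surjective x
    refine (LinearMap.congr_fun (f := LinearMap.mul' k (OpCop A) ∘ₗ
        LinearMap.rTensor _ ((op k A).toLinearMap ∘ₗ antipode k ∘ₗ (op k A).symm.toLinearMap) ∘ₗ
        (opTensor k A A).toLinearMap)
      (g := (op k A).toLinearMap ∘ₗ LinearMap.mul' k A ∘ₗ (antipode k).lTensor A)
      (by ext; simp [op_mul]) (comul a)).trans ?_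
    simp [counit_op, Algebra.algebraMap_eq_smul_one, op_one]
  mul_antipode_lTensor_comul := LinearMap.ext fun x => by
    obtain ⟨a, rfl⟩ := (op k A).surjective x
    refine (LinearMap.congr_fun (f := LinearMap.mul' k (OpCop A) ∘ₗ
        LinearMap.lTensor _ ((op k A).toLinearMap ∘ₗ antipode k ∘ₗ (op k A).symm.toLinearMap) ∘ₗ
        (opTensor k A A).toLinearMap)
      (g := (op k A).toLinearMap ∘ₗ LinearMap.mul' k A ∘ₗ (antipode k).rTensor A)
      (by ext; simp [op_mul]) (comul a)).trans ?_
    simp [counit_op, Algebra.algebraMap_eq_smul_one, op_one]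

theorem antipode_op (a : A) : antipode k (op k A a) = op k A (antipode k a) :=
  rfl

theorem comul2_op (a : A) : comul2 k (OpCop A) (op k A a) = opTensor₃ k A (comul2 k A a) := by
  rw [comul2, LinearMap.comp_apply, comul_op, lTensor_comul_opTensor, coassoc_apply]
  rfl

theorem adR_op (a : A) : adR k (OpCop A) (op k A a) = opTensor k A A (adL k A a) := by
  simp only [adR, adL, LinearMap.comp_apply, comul2_op]
  refine LinearMap.congr_fun
    (f := (LinearMap.mul' k (OpCop A)).lTensor _ ∘ₗ (TensorProduct.assoc k _ _ _).toLinearMap ∘ₗ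
      (TensorProduct.comm k _ _).toLinearMap.rTensor _ ∘ₗ
      (TensorProduct.assoc k _ _ _).symm.toLinearMap ∘ₗ (antipode k).rTensor _ ∘ₗ opTensor₃ k A)
    (g := (opTensor k A A).toLinearMap ∘ₗ (LinearMap.mul' k A).rTensor _ ∘ₗ
      (TensorProduct.assoc k _ _ _).symm.toLinearMap ∘ₗ
      (TensorProduct.comm k _ _).toLinearMap.lTensor _ ∘ₗ ((antipode k).lTensor A).lTensor A)
    ?_ (comul2 k A a)
  ext
  simp [opTensor₃, antipode_op, op_mul]

/-- The bialgebra map `A^{op,cop} → B^{op,cop}` induced by a bialgebra map `A → B`. -/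
noncomputable def map (π : A →ₐc[k] B) : OpCop A →ₐc[k] OpCop B :=
  BialgHom.ofAlgHom (AlgHom.ofLinearMap
      ((op k B).toLinearMap ∘ₗ (π : A →ₗ[k] B) ∘ₗ (op k A).symm.toLinearMap)
      (congrArg (op k B) (map_one π))
      (fun x y => congrArg (op k B) (map_mul π ((op k A).symm y) ((op k A).symm x))))
    (AlgHom.ext fun x => by
      obtain ⟨a, rfl⟩ := (op k A).surjective x
      exact CoalgHomClass.counit_comp_apply π a)
    (AlgHom.ext fun x => by
      obtain ⟨a, rfl⟩ := (op k A).surjective x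
      refine Eq.trans ?_ (congrArg (opTensor k B B) (CoalgHomClass.map_comp_comul_apply π a))
      exact LinearMap.congr_fun
        (f := TensorProduct.map
          ((op k B).toLinearMap ∘ₗ (π : A →ₗ[k] B) ∘ₗ (op k A).symm.toLinearMap)
          ((op k B).toLinearMap ∘ₗ (π : A →ₗ[k] B) ∘ₗ (op k A).symm.toLinearMap) ∘ₗ
          (opTensor k A A).toLinearMap)
        (g := (opTensor k B B).toLinearMap ∘ₗ TensorProduct.map (π : A →ₗ[k] B) (π : A →ₗ[k] B))
        (by ext; simp) (comul a))

theorem map_op (π : A →ₐc[k] B) (a : A) : map π (op k A a) = op k B (π a) :=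
  rfl

variable (k A) in
/-- The antipode as a bialgebra map from `A` to `A^{op,cop}`. -/
noncomputable def antipodeTo : A →ₐc[k] OpCop A :=
  BialgHom.ofAlgHom (AlgHom.ofLinearMap ((op k A).toLinearMap ∘ₗ antipode k)
      (congrArg (op k A) antipode_one)
      (fun x y => congrArg (op k A) (antipode_mul_antidistrib x y)))
    (AlgHom.ext fun a => counit_antipode a)
    (AlgHom.ext fun a => by
      change TensorProduct.map ((op k A).toLinearMap ∘ₗ antipode k)
        ((op k A).toLinearMap ∘ₗ antipode k) (comul a) = opTensor k A A (comul (antipode k a))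
      rw [comul_antipode]
      exact LinearMap.congr_fun
        (f := TensorProduct.map ((op k A).toLinearMap ∘ₗ antipode k)
          ((op k A).toLinearMap ∘ₗ antipode k))
        (g := (opTensor k A A).toLinearMap ∘ₗ TensorProduct.map (antipode k) (antipode k) ∘ₗ
          (TensorProduct.comm k A A).toLinearMap) (by ext; simp) (comul a))

variable (k A) in
/-- The antipode as a bialgebra map from `A^{op,cop}` to `A`. -/
noncomputable def antipodeFrom : OpCop A →ₐc[k] A :=
  BialgHom.ofAlgHom (AlgHom.ofLinearMap (antipode k ∘ₗ (op k A).symm.toLinearMap)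
      antipode_one (fun x y => antipode_mul_antidistrib ((op k A).symm y) ((op k A).symm x)))
    (AlgHom.ext fun x => counit_antipode ((op k A).symm x))
    (AlgHom.ext fun x => by
      obtain ⟨a, rfl⟩ := (op k A).surjective x
      change TensorProduct.map (antipode k ∘ₗ (op k A).symm.toLinearMap)
        (antipode k ∘ₗ (op k A).symm.toLinearMap) (opTensor k A A (comul a)) =
          comul (antipode k a)
      rw [comul_antipode]
      exact LinearMap.congr_fun
        (f := TensorProduct.map (antipode k ∘ₗ (op k A).symm.toLinearMap)
          (antipode k ∘ₗ (op k A).symm.toLinearMap) ∘ₗ (opTensor k A A).toLinearMap)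
        (g := TensorProduct.map (antipode k) (antipode k) ∘ₗ
          (TensorProduct.comm k A A).toLinearMap) (by ext; simp) (comul a))

theorem isRightNormal_map_iff {π : A →ₐc[k] B} :
    IsRightNormal k (OpCop A) (map π : OpCop A →ₗ[k] OpCop B) ↔
      IsLeftNormal k A (π : A →ₗ[k] B) := by
  have key (a : A) : (map π : OpCop A →ₗ[k] OpCop B).rTensor _ (adR k (OpCop A) (op k A a)) =
      opTensor k A B ((π : A →ₗ[k] B).lTensor A (adL k A a)) := by
    rw [adR_op]
    exact LinearMap.congr_fun
      (f := (map π : OpCop A →ₗ[k] OpCop B).rTensor _ ∘ₗ (opTensor k A A).toLinearMap)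
      (g := (opTensor k A B).toLinearMap ∘ₗ (π : A →ₗ[k] B).lTensor A)
      (by ext; simp [map_op]) (adL k A a)
  constructor
  · rintro ⟨ρ, hρ⟩
    refine ⟨(opTensor k A B).symm.toLinearMap ∘ₗ ρ ∘ₗ (op k B).toLinearMap,
      LinearMap.ext fun a => ?_⟩
    exact (opTensor k A B).symm_apply_eq.2 ((LinearMap.congr_fun hρ (op k A a)).trans (key a))
  · rintro ⟨l, hl⟩
    refine ⟨(opTensor k A B).toLinearMap ∘ₗ l ∘ₗ (op k B).symm.toLinearMap,
      LinearMap.ext fun x => ?_⟩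
    obtain ⟨a, rfl⟩ := (op k A).surjective x
    exact (congrArg (opTensor k A B) (LinearMap.congr_fun hl a)).trans (key a).symm

theorem map_surjective {π : A →ₐc[k] B} (hs : Function.Surjective π) :
    Function.Surjective (map π) :=
  (op k B).surjective.comp (hs.comp (op k A).symm.surjective)

end HopfAlgebra

end OpCop

section Haar

variable {k A : Type u} [Field k] [Ring A] [HopfAlgebra k A]

theorem IsHaarFunctional.opCop {h : A →ₗ[k] k} (hh : IsHaarFunctional h) :
    IsHaarFunctional (h ∘ₗ (OpCop.op k A).symm.toLinearMap) where
  map_one := hh.map_one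
  conv ψ := LinearMap.ext fun x => by
    obtain ⟨a, rfl⟩ := (OpCop.op k A).surjective x
    exact (LinearMap.congr_fun (OpCop.conv_comp_op _ ψ) a).trans
      (LinearMap.congr_fun (hh.conv_left (ψ ∘ₗ (OpCop.op k A).toLinearMap)) a)

theorem IsHaarFunctional.of_opCop {h : OpCop A →ₗ[k] k} (hh : IsHaarFunctional h) :
    IsHaarFunctional (h ∘ₗ (OpCop.op k A).toLinearMap) where
  map_one := hh.map_one
  conv ψ := (OpCop.conv_comp_op (ψ ∘ₗ (OpCop.op k A).symm.toLinearMap) h).symm.trans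
    (congrArg (· ∘ₗ (OpCop.op k A).toLinearMap) (hh.conv_left _))

end Haar

theorem exists_comp_eq_of_ker_le_ker {R M N P : Type*} [Ring R] [AddCommGroup M] [Module R M]
    [AddCommGroup N] [Module R N] [AddCommGroup P] [Module R P] {f : M →ₗ[R] N}
    (hf : Function.Surjective f) {g : M →ₗ[R] P} (hfg : LinearMap.ker f ≤ LinearMap.ker g) :
    ∃ l : N →ₗ[R] P, l ∘ₗ f = g := by
  let e := f.quotKerEquivOfSurjective hf
  refine ⟨(LinearMap.ker f).liftQ g hfg ∘ₗ e.symm.toLinearMap, LinearMap.ext fun m => ?_⟩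
  have he : e.symm (f m) = (LinearMap.ker f).mkQ m := e.symm_apply_eq.2 rfl
  rw [LinearMap.comp_apply, LinearMap.comp_apply, LinearEquiv.coe_coe, he]
  rfl

section Normality

variable {k A A' B B' : Type u} [Field k] [Ring A] [HopfAlgebra k A] [Ring A'] [HopfAlgebra k A']
  [Ring B] [HopfAlgebra k B] [Ring B'] [HopfAlgebra k B']

theorem IsRightNormal.of_injective {π : A →ₐc[k] B} (hs : Function.Surjective π)
    {π' : A' →ₐc[k] B'} (hπ' : IsRightNormal k A' (π' : A' →ₗ[k] B')) {F : A →ₐc[k] A'}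
    {F' : B →ₐc[k] B'} (hF : Function.Injective F) (hF' : Function.Injective F')
    (hcomm : ∀ a, F' (π a) = π' (F a)) : IsRightNormal k A (π : A →ₗ[k] B) := by
  obtain ⟨ρ', hρ'⟩ := hπ'
  refine exists_comp_eq_of_ker_le_ker hs fun a ha => ?_
  have hinj := TensorProduct.map_injective_of_flat_flat (F' : B →ₗ[k] B') (F : A →ₗ[k] A') hF' hF
  refine hinj ?_
  rw [map_zero]
  calc TensorProduct.map (F' : B →ₗ[k] B') (F : A →ₗ[k] A')
        ((π : A →ₗ[k] B).rTensor A (adR k A a))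
      = (π' : A' →ₗ[k] B').rTensor A'
          (TensorProduct.map (F : A →ₗ[k] A') (F : A →ₗ[k] A') (adR k A a)) :=
        LinearMap.congr_fun
          (f := TensorProduct.map (F' : B →ₗ[k] B') (F : A →ₗ[k] A') ∘ₗ
            (π : A →ₗ[k] B).rTensor A)
          (g := (π' : A' →ₗ[k] B').rTensor A' ∘ₗ
            TensorProduct.map (F : A →ₗ[k] A') (F : A →ₗ[k] A'))
          (by ext; simp [hcomm]) (adR k A a)
    _ = ρ' (F' (π a)) := by
        rw [← adR_bialgHom, hcomm]
        exact (LinearMap.congr_fun hρ' (F a)).symm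
    _ = 0 := by
        rw [show π a = 0 from ha, map_zero, map_zero]

theorem isLeftNormal_iff_isRightNormal {π : A →ₐc[k] B} (hs : Function.Surjective π)
    (hA : Function.Injective (antipode k (A := A)))
    (hB : Function.Injective (antipode k (A := B))) :
    IsLeftNormal k A (π : A →ₗ[k] B) ↔ IsRightNormal k A (π : A →ₗ[k] B) := by
  have hcomm (a : A) : antipode k (π a) = π (antipode k a) :=
    (LinearMap.congr_fun (comp_antipode_bialgHom π) a).symm
  rw [← OpCop.isRightNormal_map_iff]
  constructor
  · exact fun h => h.of_injective hs (F := OpCop.antipodeTo k A) (F' := OpCop.antipodeTo k B)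
      ((OpCop.op k A).injective.comp hA) ((OpCop.op k B).injective.comp hB)
      fun a => congrArg (OpCop.op k B) (hcomm a)
  · exact fun h => h.of_injective (OpCop.map_surjective hs) (F := OpCop.antipodeFrom k A)
      (F' := OpCop.antipodeFrom k B) (hA.comp (OpCop.op k A).symm.injective)
      (hB.comp (OpCop.op k B).symm.injective) fun x => hcomm ((OpCop.op k A).symm x)

end Normality

section Main

variable {k A B : Type u} [Field k] [IsAlgClosed k] [Ring A] [HopfAlgebra k A] [Ring B]
  [HopfAlgebra k B] {g : A →ₗ[k] k} {π : A →ₐc[k] B}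

theorem IsHaarFunctional.exists_of_isLeftNormal (hg : IsHaarFunctional g)
    (hs : Function.Surjective π) (hπ : IsLeftNormal k A (π : A →ₗ[k] B))
    (hS2 : ∀ D : Submodule k B, IsSimpleSubcoalgebra k B D →
      D.map (antipode k ∘ₗ antipode k) ≤ D) :
    ∃ h : B →ₗ[k] k, IsHaarFunctional h := by
  suffices ∃ h : OpCop B →ₗ[k] k, IsHaarFunctional h from
    this.imp' _ fun h hh => hh.of_opCop
  refine hg.opCop.exists_of_isRightNormal (OpCop.map_surjective hs)
    (OpCop.isRightNormal_map_iff.2 hπ) fun D hD => ?_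
  obtain ⟨D, rfl⟩ := Submodule.map_surjective_of_surjective (OpCop.op k B).surjective D
  rintro _ ⟨_, ⟨b, hb, rfl⟩, rfl⟩
  exact ⟨_, hS2 D (OpCop.isSimpleSubcoalgebra_of_map_op hD) ⟨b, hb, rfl⟩, rfl⟩

end Main

end QG

open QG HopfAlgebra in
/-- A left- or right-normal quantum subgroup `H ≤ G` of a
linearly reductive quantum group `G` (i.e. a normal surjection of Hopf
algebras `π : O(G) → O(H)` with `O(G)` cosemisimple) such that the squared
antipode of `O(H)` leaves every simple subcoalgebra of `O(H)` invariant is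
itself linearly reductive, and `π` is normal. -/
theorem statement_0 (k : Type u) [Field k] [IsAlgClosed k]
    (G H : Type u) [Ring G] [HopfAlgebra k G] [Ring H] [HopfAlgebra k H]
    (π : G →ₐc[k] H) (hsurj : Function.Surjective π)
    (hcss : IsCosemisimple k G)
    (hnorm : IsLeftNormal k G (π : G →ₗ[k] H) ∨ IsRightNormal k G (π : G →ₗ[k] H))
    (hS2 : ∀ D : Submodule k H, IsSimpleSubcoalgebra k H D →
      D.map ((antipode (R := k) (A := H)) ∘ₗ (antipode (R := k) (A := H))) ≤ D) :
    IsCosemisimple k H ∧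
      IsLeftNormal k G (π : G →ₗ[k] H) ∧ IsRightNormal k G (π : G →ₗ[k] H) := by
  obtain ⟨g, hg⟩ := hcss.exists_isHaarFunctional
  obtain ⟨h, hh⟩ : ∃ h : H →ₗ[k] k, IsHaarFunctional h :=
    hnorm.elim (hg.exists_of_isLeftNormal hsurj · hS2) (hg.exists_of_isRightNormal hsurj · hS2)
  have hiff := isLeftNormal_iff_isRightNormal hsurj hg.antipode_injective hh.antipode_injective
  exact ⟨hh.isCosemisimple, hnorm.elim (fun hl => ⟨hl, hiff.1 hl⟩) fun hr => ⟨hiff.2 hr, hr⟩⟩
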